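/- arXiv:math/0701488 — 8 statements merged into one kernel-verified Lean document; each statement's English description precedes it below -/
import Mathlib

section
/- If a t-Mcycle of [n] exists, then n divides the binomial coefficient C(n+t−1, t). -/
/-- A `t`-Mcycle of `[n]`: a cyclic sequence of length `m = C(n+t-1, t)` of elements of
`[n]` (modeled as `Fin n`) such that every multiset of size `t` over `[n]` appears
exactly once among the `m` cyclic windows of length `t`. -/
def IsMcycle (n t : ℕ) (a : ZMod ((n + t - 1).choose t) → Fin n) : Prop :=
  ∀ s : Multiset (Fin n), Multiset.card s = t →
    ∃! i : ZMod ((n + t - 1).choose t),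
      (Multiset.range t).map (fun j => a (i + (j : ZMod ((n + t - 1).choose t)))) = s

theorem mcycle_sum_count (n t : ℕ) (x y : Fin n) :
    ∑ s : Sym (Fin n) t, Multiset.count x (s : Multiset (Fin n)) =
    ∑ s : Sym (Fin n) t, Multiset.count y (s : Multiset (Fin n)) := by
  refine Fintype.sum_equiv (Sym.equivCongr (Equiv.swap x y)) _ _ ?_
  intro s
  have h := Multiset.count_map_eq_count' (Equiv.swap x y) (s : Multiset (Fin n))
    (Equiv.injective _) x
  rw [Equiv.swap_apply_left] at h
  rw [Sym.equivCongr_apply, Sym.coe_map]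
  exact h.symm

theorem mcycle_window_count (m n t : ℕ) [NeZero m] (a : ZMod m → Fin n) (x : Fin n) :
    ∑ i : ZMod m, Multiset.count x ((Multiset.range t).map (fun j => a (i + (j : ZMod m)))) =
    t * (Finset.univ.filter (fun i => a i = x)).card := by
  have h1 : ∀ i : ZMod m,
      Multiset.count x ((Multiset.range t).map (fun j => a (i + (j : ZMod m)))) =
      ∑ j ∈ Finset.range t, if a (i + (j : ZMod m)) = x then 1 else 0 := by
    intro i
    have e : ((Multiset.range t).map (fun j => a (i + (j : ZMod m)))) =
        Multiset.map (fun j : ℕ => a (i + (j : ZMod m))) (Multiset.range t) := by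
      simp
    rw [e, Multiset.count_map, ← Finset.card_filter]
    simp only [eq_comm]
    rfl
  simp_rw [h1]
  rw [Finset.sum_comm]
  have h2 : ∀ j ∈ Finset.range t,
      (∑ i : ZMod m, if a (i + (j : ZMod m)) = x then 1 else 0) =
      (Finset.univ.filter (fun i => a i = x)).card := by
    intro j _
    rw [Finset.card_filter]
    exact Fintype.sum_equiv (Equiv.addRight (j : ZMod m)) _ _ (fun i => rfl)
  rw [Finset.sum_congr rfl h2]
  simp

theorem mcycle_necessary_condition (n t : ℕ) (hn : 0 < n) (ht : 0 < t)
    (h : ∃ a : ZMod ((n + t - 1).choose t) → Fin n, IsMcycle n t a) :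
    n ∣ (n + t - 1).choose t := by
  obtain ⟨a, ha⟩ := h
  unfold IsMcycle at ha
  have hm : 0 < (n + t - 1).choose t := Nat.choose_pos (by omega)
  generalize (n + t - 1).choose t = m at *
  haveI : NeZero m := ⟨hm.ne'⟩
  let W : ZMod m → Sym (Fin n) t := fun i =>
    ⟨(Multiset.range t).map (fun j => a (i + (j : ZMod m))), by simp⟩
  have hW : Function.Bijective W := by
    rw [Function.bijective_iff_existsUnique]
    intro s
    obtain ⟨i, hi, hu⟩ := ha s.1 s.2
    exact ⟨i, Subtype.ext hi, fun k hk => hu k (congrArg Subtype.val hk)⟩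
  have key : ∀ x : Fin n, t * (Finset.univ.filter (fun i => a i = x)).card =
      ∑ s : Sym (Fin n) t, Multiset.count x (s : Multiset (Fin n)) := by
    intro x
    rw [← mcycle_window_count]
    exact Fintype.sum_bijective W hW _ _ (fun i => rfl)
  have hc : ∀ x : Fin n, (Finset.univ.filter (fun i => a i = x)).card =
      (Finset.univ.filter (fun i => a i = ⟨0, hn⟩)).card := by
    intro x
    apply Nat.eq_of_mul_eq_mul_left ht
    rw [key, key]
    exact mcycle_sum_count n t _ _
  have htot := Finset.card_eq_sum_card_fiberwise (f := a) (s := Finset.univ)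
    (t := Finset.univ) (fun _ _ => by simp)
  rw [Finset.sum_congr rfl (fun x _ => hc x)] at htot
  simp only [Finset.card_univ, ZMod.card, Finset.sum_const, Fintype.card_fin,
    smul_eq_mul] at htot
  exact ⟨_, htot⟩
end

section
/- In any t-Mcycle of [n], every element of [n] occurs the same number of times among the characters a₀, …, a_{m−1}; namely, each element of [n] occurs exactly C(n+t−1, t)/n times. -/
theorem mcycle_equal_occurrences (n t : ℕ) (hn : 0 < n) (ht : 0 < t)
    (a : ZMod ((n + t - 1).choose t) → Fin n) (h : IsMcycle n t a) (x : Fin n) :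
    Nat.card {i : ZMod ((n + t - 1).choose t) // a i = x} = (n + t - 1).choose t / n := by
  unfold IsMcycle at h
  have hm : 0 < (n + t - 1).choose t := Nat.choose_pos (by omega)
  generalize (n + t - 1).choose t = m at *
  have : NeZero m := ⟨hm.ne'⟩
  classical
  let W : ZMod m → Sym (Fin n) t := fun i =>
    ⟨(Multiset.range t).map (fun j => a (i + (j : ZMod m))), by simp⟩
  have hW : Function.Bijective W := by
    constructor
    · intro i j hij
      obtain ⟨k, -, hk⟩ := h (W j).1 (W j).2
      rw [hk i (congrArg Subtype.val hij), hk j rfl]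
    · intro s
      obtain ⟨k, hk, -⟩ := h s.1 s.2
      exact ⟨k, Subtype.ext hk⟩
  let N : Fin n → ℕ := fun y => ∑ i : ZMod m, if a i = y then 1 else 0
  have h1 : ∀ y, ∑ s : Sym (Fin n) t, Multiset.count y s.1 = t * N y := by
    intro y
    rw [← Function.Bijective.sum_comp hW (fun s : Sym (Fin n) t => Multiset.count y s.1)]
    have h2 : ∀ i, Multiset.count y (W i).1
        = ∑ j ∈ Finset.range t, if a (i + (j : ZMod m)) = y then 1 else 0 := by
      intro i
      rw [← Finset.card_filter]
      simp only [W, Multiset.bind_def, Multiset.pure_def, Multiset.bind_singleton, Multiset.map_map,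
        Function.comp_def, Multiset.count_map, eq_comm (a := y)]
      rfl
    simp only [h2]
    rw [Finset.sum_comm]
    have h3 : ∀ j ∈ Finset.range t,
        (∑ i : ZMod m, if a (i + (j : ZMod m)) = y then 1 else 0) = N y := by
      intro j _
      exact Equiv.sum_comp (Equiv.addRight (j : ZMod m)) (fun i => if a i = y then 1 else 0)
    rw [Finset.sum_congr rfl h3]
    simp
  have h4 : ∀ y, N y = N x := by
    intro y
    apply Nat.eq_of_mul_eq_mul_left ht
    rw [← h1, ← h1, ← (Sym.equivCongr (n := t) (Equiv.swap x y)).sum_comp]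
    refine Finset.sum_congr rfl fun s _ => ?_
    have := Multiset.count_map_eq_count' (Equiv.swap x y) s.1 (Equiv.swap x y).injective x
    rw [Equiv.swap_apply_left] at this
    exact this
  have h5 : ∑ y, N y = m := by
    simp only [N]
    rw [Finset.sum_comm]
    simp [ZMod.card]
  have h6 : n * N x = m := by
    rw [← h5, Finset.sum_congr rfl (fun y _ => h4 y)]
    simp
  have h7 : Nat.card {i : ZMod m // a i = x} = N x := by
    simp [N, Nat.card_eq_fintype_card, Fintype.card_subtype]
  rw [h7, ← h6, Nat.mul_div_cancel_left _ hn]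
end

section
/- For every positive integer n, a 2-Mcycle of [n] exists if and only if n is odd. -/
lemma win_eq (n : ℕ) {m : ℕ} (a : ZMod m → Fin n) (i : ZMod m) :
    (Multiset.range 2).map (fun j => a (i + (j : ZMod m))) = {a i, a (i + 1)} := by
  have h : Multiset.range 2 = {0, 1} := by decide
  rw [h]
  simp [Multiset.bind_def, Multiset.pure_def]

/-- The closed walk through the two new vertices `x`, `y` and the old vertices `1, …, 2k`. -/
def blk (x y : ℕ) : ℕ → List ℕ
  | 0 => []
  | k + 1 => blk x y k ++ [x, 2 * k + 1, y, 2 * k + 2]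

/-- The Eulerian closed walk on `{0, …, 2k}`. -/
def eul : ℕ → List ℕ
  | 0 => [0]
  | k + 1 => eul k ++ ([0, 2 * k + 1] ++ blk (2 * k + 1) (2 * k + 2) k
      ++ [2 * k + 1, 2 * k + 2, 2 * k + 2])

lemma blk_length (x y k : ℕ) : (blk x y k).length = 4 * k := by
  induction k with
  | zero => rfl
  | succ k ih => simp [blk, ih]; ring

lemma eul_length (k : ℕ) : (eul k).length = (2 * k + 1) * (k + 1) := by
  induction k with
  | zero => rfl
  | succ k ih => simp [eul, ih, blk_length]; ring

lemma eul_head (k : ℕ) : (eul k)[0]? = some 0 := by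
  induction k with
  | zero => rfl
  | succ k ih =>
    rw [eul, List.getElem?_append_left]
    · exact ih
    · rw [eul_length]; positivity

lemma blk_lt (x y k z : ℕ) (hz : z ∈ blk x y k) : z = x ∨ z = y ∨ z ≤ 2 * k := by
  induction k with
  | zero => simp [blk] at hz
  | succ k ih =>
    simp only [blk, List.mem_append, List.mem_cons, List.not_mem_nil, or_false] at hz
    rcases hz with h | h
    · have := ih h; omega
    · omega

lemma eul_lt (k z : ℕ) (hz : z ∈ eul k) : z < 2 * k + 1 := by
  induction k with
  | zero => simp [eul] at hz; omega
  | succ k ih =>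
    simp only [eul, List.mem_append, List.mem_cons, List.not_mem_nil, or_false] at hz
    rcases hz with h | (h | h) | h
    · have := ih h; omega
    · omega
    · have := blk_lt _ _ _ _ h; omega
    · omega

lemma blk_infix (x y k v : ℕ) (h1 : 1 ≤ v) (h2 : v ≤ 2 * k) :
    ([x, v] <:+: blk x y k ++ [x] ∨ [v, x] <:+: blk x y k ++ [x]) ∧
    ([y, v] <:+: blk x y k ++ [x] ∨ [v, y] <:+: blk x y k ++ [x]) := by
  induction k with
  | zero => omega
  | succ k ih =>
    by_cases hv : v ≤ 2 * k
    · have hp : blk x y k ++ [x] <:+: blk x y (k + 1) ++ [x] :=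
        ⟨[], [2 * k + 1, y, 2 * k + 2, x], by simp [blk]⟩
      obtain ⟨a, b⟩ := ih hv
      exact ⟨a.imp (·.trans hp) (·.trans hp), b.imp (·.trans hp) (·.trans hp)⟩
    · have : v = 2 * k + 1 ∨ v = 2 * k + 2 := by omega
      rcases this with rfl | rfl
      · exact ⟨.inl ⟨blk x y k, [y, 2 * k + 2, x], by simp [blk]⟩,
          .inr ⟨blk x y k ++ [x], [2 * k + 2, x], by simp [blk]⟩⟩
      · exact ⟨.inr ⟨blk x y k ++ [x, 2 * k + 1, y], [], by simp [blk]⟩,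
          .inl ⟨blk x y k ++ [x, 2 * k + 1], [x], by simp [blk]⟩⟩

lemma blk_start (x y k : ℕ) : ∃ t, blk x y k ++ [x] = x :: t := by
  induction k with
  | zero => exact ⟨[], rfl⟩
  | succ k ih =>
    obtain ⟨t, ht⟩ := ih
    exact ⟨t ++ [2 * k + 1, y, 2 * k + 2, x], by
      rw [← List.cons_append, ← ht]; simp [blk]⟩

lemma eul_infix (k u v : ℕ) (huv : u ≤ v) (hv : v < 2 * k + 1) :
    [u, v] <:+: eul k ++ [0] ∨ [v, u] <:+: eul k ++ [0] := by
  induction k with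
  | zero =>
    obtain rfl : v = 0 := by omega
    obtain rfl : u = 0 := by omega
    exact .inl ⟨[], [], by simp [eul]⟩
  | succ k ih =>
    by_cases hv' : v < 2 * k + 1
    · have hp : eul k ++ [0] <:+: eul (k + 1) ++ [0] :=
        ⟨[], [2 * k + 1] ++ blk (2 * k + 1) (2 * k + 2) k
          ++ [2 * k + 1, 2 * k + 2, 2 * k + 2, 0], by simp [eul]⟩
      exact (ih hv').imp (·.trans hp) (·.trans hp)
    have hb : blk (2 * k + 1) (2 * k + 2) k ++ [2 * k + 1] <:+: eul (k + 1) ++ [0] :=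
      ⟨eul k ++ [0, 2 * k + 1], [2 * k + 2, 2 * k + 2, 0], by simp [eul]⟩
    by_cases hu : 1 ≤ u ∧ u ≤ 2 * k
    · obtain ⟨a, b⟩ := blk_infix (2 * k + 1) (2 * k + 2) k u hu.1 hu.2
      have : v = 2 * k + 1 ∨ v = 2 * k + 2 := by omega
      rcases this with rfl | rfl
      · exact (a.imp (·.trans hb) (·.trans hb)).symm
      · exact (b.imp (·.trans hb) (·.trans hb)).symm
    have : (u = 0 ∧ v = 2 * k + 1) ∨ (u = 0 ∧ v = 2 * k + 2) ∨
      (u = 2 * k + 1 ∧ v = 2 * k + 1) ∨ (u = 2 * k + 1 ∧ v = 2 * k + 2) ∨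
      (u = 2 * k + 2 ∧ v = 2 * k + 2) := by omega
    rcases this with ⟨rfl, rfl⟩ | ⟨rfl, rfl⟩ | ⟨rfl, rfl⟩ | ⟨rfl, rfl⟩ | ⟨rfl, rfl⟩
    · exact .inl ⟨eul k, blk (2 * k + 1) (2 * k + 2) k
          ++ [2 * k + 1, 2 * k + 2, 2 * k + 2, 0], by simp [eul]⟩
    · exact .inr ⟨eul k ++ [0, 2 * k + 1] ++ blk (2 * k + 1) (2 * k + 2) k
          ++ [2 * k + 1, 2 * k + 2], [], by simp [eul]⟩
    · obtain ⟨t, ht⟩ := blk_start (2 * k + 1) (2 * k + 2) k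
      refine .inl ⟨eul k ++ [0], t ++ [2 * k + 2, 2 * k + 2, 0], ?_⟩
      have e : eul (k + 1) ++ [0] = eul k ++ [0, 2 * k + 1] ++
          (blk (2 * k + 1) (2 * k + 2) k ++ [2 * k + 1]) ++ [2 * k + 2, 2 * k + 2, 0] := by
        simp [eul]
      rw [e, ht]; simp
    · exact .inl ⟨eul k ++ [0, 2 * k + 1] ++ blk (2 * k + 1) (2 * k + 2) k,
        [2 * k + 2, 0], by simp [eul]⟩
    · exact .inl ⟨eul k ++ [0, 2 * k + 1] ++ blk (2 * k + 1) (2 * k + 2) k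
          ++ [2 * k + 1], [0], by simp [eul]⟩

lemma odd_of_cycle (n m : ℕ) [NeZero m] (hn : 0 < n) (a : ZMod m → Fin n)
    (h : ∀ u v : Fin n, ∃! i : ZMod m, ({a i, a (i + 1)} : Multiset (Fin n)) = {u, v}) :
    Odd n := by
  classical
  let x : Fin n := ⟨0, hn⟩
  have key : ∀ u v : Fin n,
      (∑ y : Fin n, if ({u, v} : Multiset (Fin n)) = {x, y} then 1 else 0)
        + (if ({u, v} : Multiset (Fin n)) = {x, x} then 1 else 0)
        = (if u = x then 1 else 0) + (if v = x then 1 else 0) := by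
    intro u v
    have e : ∀ y, ({u, v} : Multiset (Fin n)) = {x, y} ↔ (u = x ∧ v = y) ∨ (u = y ∧ v = x) := by
      intro y
      simp only [Multiset.insert_eq_cons, Multiset.cons_eq_cons, Multiset.singleton_eq_cons_iff,
        Multiset.singleton_inj]
      constructor
      · rintro (h | ⟨h1, cs, h2, h3⟩)
        · exact .inl h
        · simp_all
      · rintro (h | ⟨rfl, rfl⟩)
        · exact .inl h
        · by_cases hh : u = x
          · left; exact ⟨hh, hh.symm⟩
          · right; exact ⟨hh, 0, by simp⟩
    simp only [e]
    by_cases hu : u = x <;> by_cases hv : v = x <;> simp [hu, hv]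
  have one : ∀ u v : Fin n,
      (∑ i : ZMod m, if ({a i, a (i + 1)} : Multiset (Fin n)) = {u, v} then 1 else 0) = 1 := by
    intro u v
    rw [← Finset.card_filter, Finset.card_eq_one]
    obtain ⟨i, hi, hu⟩ := h u v
    exact ⟨i, by ext j; simp; exact ⟨hu j, fun e => e ▸ hi⟩⟩
  have tot := Finset.sum_congr (rfl : (Finset.univ : Finset (ZMod m)) = Finset.univ)
    (fun i _ => key (a i) (a (i + 1)))
  rw [Finset.sum_add_distrib, Finset.sum_comm, Finset.sum_add_distrib, one] at tot
  simp only [one] at tot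
  have sh : (∑ i : ZMod m, if a (i + 1) = x then 1 else 0)
      = ∑ i : ZMod m, if a i = x then 1 else 0 := Equiv.sum_comp (Equiv.addRight (1 : ZMod m)) (fun i => if a i = x then (1 : ℕ) else 0)
  rw [sh] at tot
  simp at tot
  rw [Nat.odd_iff]; omega

theorem two_mcycle_iff_odd (n : ℕ) (hn : 0 < n) :
    (∃ a : ZMod ((n + 2 - 1).choose 2) → Fin n, IsMcycle n 2 a) ↔ Odd n := by
  have : NeZero ((n + 2 - 1).choose 2) := ⟨(Nat.choose_pos (by omega)).ne'⟩
  constructor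
  · rintro ⟨a, ha⟩
    refine odd_of_cycle n _ hn a fun u v => ?_
    have := ha {u, v} (by simp)
    simpa only [win_eq] using this
  · rintro ⟨k, rfl⟩
    have hm : (2 * k + 1 + 2 - 1).choose 2 = (eul k).length := by
      rw [eul_length, Nat.choose_two_right]
      apply Nat.div_eq_of_eq_mul_left (by norm_num)
      simp; ring
    unfold IsMcycle
    generalize hM : (2 * k + 1 + 2 - 1).choose 2 = m at *
    let a : ZMod m → Fin (2 * k + 1) := fun z => ⟨(eul k)[z.val]'(hm ▸ z.val_lt),
      eul_lt _ _ (List.getElem_mem _)⟩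
    have ha : ∀ j u : ℕ, (eul k ++ [0])[j]? = some u → (a (j : ZMod m)).val = u := by
      intro j u hj
      have hj' : j < (eul k ++ [0]).length := by
        by_contra hc
        rw [List.getElem?_eq_none (by omega)] at hj
        cases hj
      rw [List.length_append, List.length_singleton] at hj'
      rcases Nat.lt_or_ge j m with h | h
      · have : (j : ZMod m).val = j := ZMod.val_cast_of_lt h
        simp only [a, this]
        rw [List.getElem?_append_left (by omega), List.getElem?_eq_getElem (by omega)] at hj
        exact Option.some.inj hj
      · obtain rfl : j = m := by omega
        have h0 := eul_head k
        rw [List.getElem?_eq_getElem (by rw [eul_length]; positivity)] at h0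
        have h1 := Option.some.inj h0
        simp only [a, ZMod.natCast_self, ZMod.val_zero, h1]
        simpa [hm] using hj
    have hinf : ∀ u v : Fin (2 * k + 1), [u.val, v.val] <:+: eul k ++ [0] →
        ∃ i, a i = u ∧ a (i + 1) = v := by
      rintro u v ⟨s, t, hst⟩
      refine ⟨(s.length : ZMod m), Fin.ext (ha _ _ ?_), Fin.ext ?_⟩
      · rw [← hst]; simp
      · have := ha (s.length + 1) v (by rw [← hst]; simp)
        simpa using this
    let w : ZMod m → Sym (Fin (2 * k + 1)) 2 := fun i => ⟨{a i, a (i + 1)}, by simp⟩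
    have hs : Function.Surjective w := by
      rintro ⟨s, hs⟩
      obtain ⟨u, v, rfl⟩ := Multiset.card_eq_two.1 hs
      have hk : ∀ u v : Fin (2 * k + 1), u.val ≤ v.val →
          ∃ i, ({a i, a (i + 1)} : Multiset (Fin (2 * k + 1))) = {u, v} := by
        intro u v huv
        rcases eul_infix k u v huv v.2 with h | h
        · obtain ⟨i, h1, h2⟩ := hinf _ _ h
          exact ⟨i, by rw [h1, h2]⟩
        · obtain ⟨i, h1, h2⟩ := hinf _ _ h
          exact ⟨i, by rw [h1, h2, Multiset.pair_comm]⟩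
      rcases le_total u.val v.val with h | h
      · obtain ⟨i, hi⟩ := hk u v h
        exact ⟨i, Subtype.ext hi⟩
      · obtain ⟨i, hi⟩ := hk v u h
        exact ⟨i, Subtype.ext (hi.trans (Multiset.pair_comm _ _))⟩
    have hb : Function.Bijective w := by
      rw [Fintype.bijective_iff_surjective_and_card]
      refine ⟨hs, ?_⟩
      rw [ZMod.card, Sym.card_sym_eq_choose, Fintype.card_fin, hM]
    have hfin : ∀ s : Multiset (Fin (2 * k + 1)), Multiset.card s = 2 →
        ∃! i : ZMod m, (Multiset.range 2).map (fun j => a (i + (j : ZMod m))) = s := by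
      intro s hs
      simp only [win_eq]
      obtain ⟨i, hi, hu⟩ := hb.existsUnique ⟨s, hs⟩
      exact ⟨i, congrArg Subtype.val hi, fun j hj => hu j (Subtype.ext hj)⟩
    exact ⟨a, hfin⟩
end

section
/- For every integer n ≥ 4 with n not divisible by 3, a 3-Mcycle of [n] exists. -/
theorem sameCycle_inv_r {E : Type*} {σ : Equiv.Perm E} {e f : E} :
    σ.SameCycle e (σ⁻¹ f) ↔ σ.SameCycle e f := by
  rw [← Equiv.Perm.sameCycle_apply_right]
  simp

/-- Merging two cycles of a permutation by a transposition. -/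
theorem merge_cycles {E : Type*} [Finite E] [DecidableEq E] (σ : Equiv.Perm E) (e f : E)
    (hef : ¬ σ.SameCycle e f) :
    (∀ x, σ.SameCycle e x → (σ * Equiv.swap e f).SameCycle e x) ∧
      (σ * Equiv.swap e f).SameCycle e f := by
  set τ := σ * Equiv.swap e f with hτ
  have he : τ e = σ f := by simp [hτ]
  have hf : τ f = σ e := by simp [hτ]
  have ho : ∀ x, x ≠ e → x ≠ f → τ x = σ x := by
    intro x h1 h2
    simp [hτ, Equiv.swap_apply_of_ne_of_ne h1 h2]
  have step : ∀ x, τ.SameCycle e x → τ.SameCycle e (τ x) := by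
    intro x hx
    exact Equiv.Perm.sameCycle_apply_right.2 hx
  have hD : ∀ k : ℕ, τ.SameCycle e ((σ ^ (k + 1)) f) := by
    intro k
    induction k with
    | zero =>
      have := step e (Equiv.Perm.SameCycle.refl _ _)
      rw [he] at this
      simpa using this
    | succ k ih =>
      rw [pow_succ', Equiv.Perm.mul_apply]
      by_cases h1 : (σ ^ (k + 1)) f = f
      · rw [h1, ← he]
        exact step e (Equiv.Perm.SameCycle.refl _ _)
      · by_cases h2 : (σ ^ (k + 1)) f = e
        · exfalso
          apply hef
          exact Equiv.Perm.SameCycle.symm ⟨((k + 1 : ℕ) : ℤ), by rw [zpow_natCast]; exact h2⟩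
        · rw [← ho _ h2 h1]
          exact step _ ih
  have hff : τ.SameCycle e f := by
    have h0 : 0 < orderOf σ := orderOf_pos σ
    have := hD (orderOf σ - 1)
    rw [Nat.sub_add_cancel h0, pow_orderOf_eq_one] at this
    simpa using this
  refine ⟨?_, hff⟩
  have hC : ∀ k : ℕ, τ.SameCycle e ((σ ^ k) e) := by
    intro k
    induction k with
    | zero => simpa using Equiv.Perm.SameCycle.refl τ e
    | succ k ih =>
      rw [pow_succ', Equiv.Perm.mul_apply]
      by_cases h1 : (σ ^ k) e = e
      · rw [h1, ← hf]
        exact step f hff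
      · by_cases h2 : (σ ^ k) e = f
        · exfalso
          apply hef
          exact ⟨(k : ℤ), by rw [zpow_natCast]; exact h2⟩
        · rw [← ho _ h1 h2]
          exact step _ ih
  intro x hx
  obtain ⟨k, -, -, hk⟩ := hx.exists_pow_eq''
  rw [← hk]
  exact hC k

/-- Eulerian circuits in balanced connected finite digraphs. -/
theorem euler_perm {E V : Type*} [Finite E] (t h : E → V) (σ₀ : Equiv.Perm E)
    (h0 : ∀ e, t (σ₀ e) = h e)
    (hconn : ∀ P : V → Prop, (∀ e, P (t e) ↔ P (h e)) → ∀ e f, P (t e) → P (t f)) (e₀ : E) :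
    ∃ σ : Equiv.Perm E, (∀ e, t (σ e) = h e) ∧ ∀ e, σ.SameCycle e₀ e := by
  classical
  have : Fintype E := Fintype.ofFinite E
  have hne : Nonempty {σ : Equiv.Perm E // ∀ e, t (σ e) = h e} := ⟨⟨σ₀, h0⟩⟩
  obtain ⟨⟨σ, hσ⟩, hmax⟩ := Finite.exists_max
    (fun σ : {σ : Equiv.Perm E // ∀ e, t (σ e) = h e} => {x | σ.1.SameCycle e₀ x}.ncard)
  refine ⟨σ, hσ, ?_⟩
  have key : ∀ e f, σ.SameCycle e₀ e → h e = h f → σ.SameCycle e₀ f := by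
    intro e f he hh
    by_contra hf
    have hef : ¬ σ.SameCycle e f := fun h' => hf (he.trans h')
    obtain ⟨m1, m2⟩ := merge_cycles σ e f hef
    have hτ : ∀ x, t ((σ * Equiv.swap e f) x) = h x := by
      intro x
      rw [Equiv.Perm.mul_apply, hσ]
      by_cases h1 : x = e
      · subst h1; simp [hh]
      · by_cases h2 : x = f
        · subst h2; simp [hh]
        · rw [Equiv.swap_apply_of_ne_of_ne h1 h2]
    have hlt := hmax ⟨σ * Equiv.swap e f, hτ⟩
    have hb := m1 e₀ he.symm
    have : {x | σ.SameCycle e₀ x}.ncard < {x | (σ * Equiv.swap e f).SameCycle e₀ x}.ncard := by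
      apply Set.ncard_lt_ncard _ (Set.toFinite _)
      refine ⟨fun x hx => hb.symm.trans (m1 x (he.symm.trans hx)), fun hsub => hf ?_⟩
      exact hsub (hb.symm.trans m2)
    exact absurd hlt (not_le.2 this)
  have hP := hconn (fun v => ∃ e, σ.SameCycle e₀ e ∧ h e = v) (by
    intro e
    have hpe : h (σ⁻¹ e) = t e := by
      rw [← hσ]; simp
    constructor
    · rintro ⟨e', h1, h2⟩
      have := key e' (σ⁻¹ e) h1 (by rw [h2, hpe])
      exact ⟨e, sameCycle_inv_r.1 this, rfl⟩
    · rintro ⟨e', h1, h2⟩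
      have := key e' e h1 h2
      exact ⟨σ⁻¹ e, sameCycle_inv_r.2 this, hpe⟩)
  intro f
  obtain ⟨e', h1, h2⟩ := hP e₀ f ⟨σ⁻¹ e₀, sameCycle_inv_r.2
    (Equiv.Perm.SameCycle.refl _ _), by rw [← hσ]; simp⟩
  have hpf : h (σ⁻¹ f) = t f := by
    rw [← hσ]; simp
  have := key e' (σ⁻¹ f) h1 (by rw [h2, hpf])
  exact sameCycle_inv_r.1 this

/-- A transitive permutation can be parametrized by `ZMod m`. -/
theorem cyc_param {E : Type*} [Finite E] (σ : Equiv.Perm E) (e₀ : E)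
    (hs : ∀ e, σ.SameCycle e₀ e) (m : ℕ) (hm : Nat.card E = m) :
    ∃ f : ZMod m → E, Function.Bijective f ∧ ∀ i, f (i + 1) = σ (f i) := by
  have hmp : 0 < m := by
    rw [← hm]
    have : Nonempty E := ⟨e₀⟩
    exact Nat.card_pos
  have : NeZero m := ⟨hmp.ne'⟩
  have hpos : 0 < Function.minimalPeriod σ e₀ := by
    apply Function.minimalPeriod_pos_of_mem_periodicPts
    exact ⟨orderOf σ, orderOf_pos σ, by
      rw [Function.IsPeriodicPt, ← Equiv.Perm.coe_pow, pow_orderOf_eq_one]; rfl⟩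
  have hbij : Function.Bijective
      (fun i : Fin (Function.minimalPeriod σ e₀) => σ^[i.val] e₀) := by
    constructor
    · intro i j hij
      have := Function.iterate_injOn_Iio_minimalPeriod (f := σ) (x := e₀) i.2 j.2 hij
      exact Fin.ext this
    · intro e
      obtain ⟨k, -, -, hk⟩ := (hs e).exists_pow_eq''
      refine ⟨⟨k % Function.minimalPeriod σ e₀, Nat.mod_lt _ hpos⟩, ?_⟩
      simp only [Function.iterate_mod_minimalPeriod_eq]
      rw [← hk, Equiv.Perm.coe_pow]
  have hper : Function.minimalPeriod σ e₀ = m := by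
    rw [← hm, ← Nat.card_eq_of_bijective _ hbij, Nat.card_fin]
  have hcast : ∀ k : ℕ, σ^[(k : ZMod m).val] e₀ = σ^[k] e₀ := by
    intro k
    rw [ZMod.val_natCast, ← hper, Function.iterate_mod_minimalPeriod_eq]
  refine ⟨fun i => σ^[i.val] e₀, ?_, ?_⟩
  · have hsurj : Function.Surjective (fun i : ZMod m => σ^[i.val] e₀) := by
      intro e
      obtain ⟨k, hk⟩ := hbij.2 e
      exact ⟨(k.val : ZMod m), by simpa only [hcast] using hk⟩
    refine (Nat.bijective_iff_surjective_and_card _).2 ⟨hsurj, ?_⟩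
    rw [hm, Nat.card_zmod]
  · intro i
    have : i + 1 = ((i.val + 1 : ℕ) : ZMod m) := by simp
    simp only [this, hcast]
    exact Function.iterate_succ_apply' σ _ e₀

/-- cyclic difference -/
def cdiff (n x y : ℕ) : ℕ := if x ≤ y then y - x else y + n - x

/-- the base set of difference pairs -/
def Bs (n d e : ℕ) : Prop :=
  (d = e ∧ 2 * d ≤ n) ∨
  (d ≠ e ∧ d + e + d < n ∧ d + e + e < n ∧ ¬ (d = 1 ∧ 2 * e + 2 = n) ∧ ¬ (e = 1 ∧ 2 * d + 2 = n)) ∨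
  (d = 1 ∧ 2 * e = n) ∨ (e = 1 ∧ 2 * d = n)

/-- the chosen windows -/
def Wn (n x y z : ℕ) : Prop := Bs n (cdiff n x y) (cdiff n y z)

theorem cdiff_lt {n x y : ℕ} (hx : x < n) (hy : y < n) : cdiff n x y < n := by
  unfold cdiff; split_ifs <;> omega

theorem Bs_symm {n d e : ℕ} (h : Bs n d e) : Bs n e d := by
  unfold Bs at *; omega

/-- third difference, uniqueness among rotations -/
theorem Bs_rot {n a b c : ℕ} (hn : 5 ≤ n) (h3 : ¬ 3 ∣ n) (hs : a + b + c = n)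
    (h1 : Bs n a b) (h2 : Bs n b c) : False := by
  unfold Bs at *; omega

theorem Bs_lt {n a b c : ℕ} (hs : a + b + c = n) (h1 : a < b) (h2 : b < c) :
    Bs n a b ∨ Bs n c a := by
  by_cases h : a = 1 ∧ 2 * b + 2 = n
  · right; right; right; right; omega
  · left; right; left; omega

theorem Bs_eq {n a c : ℕ} (hs : a + a + c = n) : Bs n a a := by
  left; omega

theorem Bs_ex {n a b c : ℕ} (hs : a + b + c = n) :
    Bs n a b ∨ Bs n b c ∨ Bs n c a := by
  have sy : ∀ d e, Bs n d e ↔ Bs n e d := fun d e => ⟨Bs_symm, Bs_symm⟩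
  rcases lt_trichotomy a b with h1 | h1 | h1
  · rcases lt_trichotomy b c with h2 | h2 | h2
    · have := Bs_lt hs h1 h2
      tauto
    · subst h2
      have := Bs_eq (n := n) (a := b) (c := a) (by omega)
      tauto
    · rcases lt_trichotomy c a with h4 | h4 | h4
      · have := Bs_lt (n := n) (a := c) (b := a) (c := b) (by omega) h4 h1
        tauto
      · subst h4
        have := Bs_eq (n := n) (a := c) (c := b) (by omega)
        tauto
      · have := Bs_lt (n := n) (a := a) (b := c) (c := b) (by omega) h4 h2
        have := sy a c
        have := sy b a
        tauto
  · subst h1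
    have := Bs_eq hs
    tauto
  · rcases lt_trichotomy a c with h2 | h2 | h2
    · have := Bs_lt (n := n) (a := b) (b := a) (c := c) (by omega) h1 h2
      have := sy b a
      have := sy c b
      tauto
    · subst h2
      have := Bs_eq (n := n) (a := a) (c := b) (by omega)
      tauto
    · rcases lt_trichotomy c b with h4 | h4 | h4
      · have := Bs_lt (n := n) (a := c) (b := b) (c := a) (by omega) h4 h1
        have := sy c b
        have := sy a c
        tauto
      · subst h4
        have := Bs_eq (n := n) (a := c) (c := a) (by omega)
        tauto
      · have := Bs_lt (n := n) (a := b) (b := c) (c := a) (by omega) h4 h2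
        tauto

theorem Bs_le {n a b : ℕ} (hn : 5 ≤ n) (h : Bs n a b) : a + b ≤ n := by
  unfold Bs at h; omega

theorem W_sum {n x y z : ℕ} (hn : 5 ≤ n) (hx : x < n) (hy : y < n) (hz : z < n)
    (h : Wn n x y z) :
    (x = y ∧ y = z) ∨ cdiff n x y + cdiff n y z + cdiff n z x = n := by
  have := Bs_le hn h
  unfold cdiff at *
  split_ifs at * <;> omega

theorem W_rot {n x y z : ℕ} (hn : 5 ≤ n) (h3 : ¬ 3 ∣ n) (hx : x < n) (hy : y < n) (hz : z < n)
    (h : Wn n x y z) (h' : Wn n y z x) : x = y ∧ y = z := by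
  rcases W_sum hn hx hy hz h with h1 | h1
  · exact h1
  · exact (Bs_rot hn h3 h1 h h').elim

theorem W_odd {n x y z : ℕ} (hn : 5 ≤ n) (hx : x < n) (hy : y < n) (hz : z < n)
    (h : Wn n x y z) (h' : Wn n y x z) : x = y ∨ y = z ∨ x = z := by
  by_contra! hh
  obtain ⟨h1, h2, h4⟩ := hh
  have e1 := W_sum hn hx hy hz h
  have e2 := W_sum hn hy hx hz h'
  unfold cdiff at *
  split_ifs at * <;> omega

theorem W_bca {n x y z : ℕ} (hn : 5 ≤ n) (h3 : ¬ 3 ∣ n) (hx : x < n) (hy : y < n) (hz : z < n)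
    (h : Wn n x y z) (h' : Wn n y z x) : x = y ∧ y = z ∧ z = x := by
  have := W_rot hn h3 hx hy hz h h'
  omega

theorem W_cab {n x y z : ℕ} (hn : 5 ≤ n) (h3 : ¬ 3 ∣ n) (hx : x < n) (hy : y < n) (hz : z < n)
    (h : Wn n x y z) (h' : Wn n z x y) : x = z ∧ y = x ∧ z = y := by
  have := W_rot hn h3 hz hx hy h' h
  omega

theorem W_bac {n x y z : ℕ} (hn : 5 ≤ n) (h3 : ¬ 3 ∣ n) (hx : x < n) (hy : y < n) (hz : z < n)
    (h : Wn n x y z) (h' : Wn n y x z) : x = y ∧ y = x ∧ z = z := by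
  rcases W_odd hn hx hy hz h h' with e | e | e
  · omega
  · subst e
    have := W_cab hn h3 hx hy hy h h'
    omega
  · subst e
    have := W_bca hn h3 hx hy hx h h'
    omega

theorem W_cba {n x y z : ℕ} (hn : 5 ≤ n) (h3 : ¬ 3 ∣ n) (hx : x < n) (hy : y < n) (hz : z < n)
    (h : Wn n x y z) (h' : Wn n z y x) : x = z ∧ y = y ∧ z = x := by
  have hd : x = y ∨ y = z ∨ x = z := by
    by_contra! hh
    obtain ⟨h1, h2, h4⟩ := hh
    have e1 := W_sum hn hx hy hz h
    have e2 := W_sum hn hz hy hx h'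
    unfold cdiff at *
    split_ifs at * <;> omega
  rcases hd with e | e | e
  · subst e
    have := W_cab hn h3 hx hy hz h h'
    omega
  · subst e
    have := W_bca hn h3 hx hy hy h h'
    omega
  · omega

theorem W_acb {n x y z : ℕ} (hn : 5 ≤ n) (h3 : ¬ 3 ∣ n) (hx : x < n) (hy : y < n) (hz : z < n)
    (h : Wn n x y z) (h' : Wn n x z y) : x = x ∧ y = z ∧ z = y := by
  have hd : x = y ∨ y = z ∨ x = z := by
    by_contra! hh
    obtain ⟨h1, h2, h4⟩ := hh
    have e1 := W_sum hn hx hy hz h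
    have e2 := W_sum hn hx hz hy h'
    unfold cdiff at *
    split_ifs at * <;> omega
  rcases hd with e | e | e
  · subst e
    have := W_bca hn h3 hx hx hz h h'
    omega
  · omega
  · subst e
    have := W_cab hn h3 hx hy hx h h'
    omega

theorem pair_cases {α : Type*} {y z p q : α}
    (h : ({y, z} : Multiset α) = {p, q}) : (p = y ∧ q = z) ∨ (p = z ∧ q = y) := by
  classical
  have hp : p ∈ ({y, z} : Multiset α) := by rw [h]; simp
  simp only [Multiset.insert_eq_cons, Multiset.mem_cons, Multiset.mem_singleton] at hp
  rcases hp with rfl | rfl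
  · left
    simpa [eq_comm] using h
  · right
    rw [Multiset.pair_comm] at h
    simpa [eq_comm] using h

theorem triple_cases {α : Type*} {x y z p q r : α}
    (h : ({x, y, z} : Multiset α) = {p, q, r}) :
    (p = x ∧ q = y ∧ r = z) ∨ (p = x ∧ q = z ∧ r = y) ∨ (p = y ∧ q = x ∧ r = z) ∨
    (p = y ∧ q = z ∧ r = x) ∨ (p = z ∧ q = x ∧ r = y) ∨ (p = z ∧ q = y ∧ r = x) := by
  classical
  have hp : p ∈ ({x, y, z} : Multiset α) := by rw [h]; simp
  simp only [Multiset.insert_eq_cons, Multiset.mem_cons, Multiset.mem_singleton] at hp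
  rcases hp with rfl | rfl | rfl
  · have := pair_cases ((Multiset.cons_inj_right p).1 h)
    tauto
  · have e : ({x, p, z} : Multiset α) = {p, x, z} := Multiset.cons_swap _ _ _
    rw [e] at h
    have := pair_cases ((Multiset.cons_inj_right p).1 h)
    tauto
  · have e : ({x, y, p} : Multiset α) = {p, x, y} := by
      rw [Multiset.pair_comm y p]; exact Multiset.cons_swap _ _ _
    rw [e] at h
    have := pair_cases ((Multiset.cons_inj_right p).1 h)
    tauto

theorem W_unique {n : ℕ} (hn : 5 ≤ n) (h3 : ¬ 3 ∣ n) {x y z p q r : Fin n}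
    (h : Wn n x y z) (h' : Wn n p q r)
    (hm : ({x, y, z} : Multiset (Fin n)) = {p, q, r}) : x = p ∧ y = q ∧ z = r := by
  rcases triple_cases hm with ⟨rfl, rfl, rfl⟩ | ⟨rfl, rfl, rfl⟩ | ⟨rfl, rfl, rfl⟩ |
    ⟨rfl, rfl, rfl⟩ | ⟨rfl, rfl, rfl⟩ | ⟨rfl, rfl, rfl⟩
  · exact ⟨rfl, rfl, rfl⟩
  · simpa only [Fin.ext_iff] using W_acb hn h3 (Fin.is_lt _) (Fin.is_lt _) (Fin.is_lt _) h h'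
  · simpa only [Fin.ext_iff] using W_bac hn h3 (Fin.is_lt _) (Fin.is_lt _) (Fin.is_lt _) h h'
  · simpa only [Fin.ext_iff] using W_bca hn h3 (Fin.is_lt _) (Fin.is_lt _) (Fin.is_lt _) h h'
  · simpa only [Fin.ext_iff] using W_cab hn h3 (Fin.is_lt _) (Fin.is_lt _) (Fin.is_lt _) h h'
  · simpa only [Fin.ext_iff] using W_cba hn h3 (Fin.is_lt _) (Fin.is_lt _) (Fin.is_lt _) h h'

theorem mset_rot {α : Type*} (x y z : α) : ({y, z, x} : Multiset α) = {x, y, z} := by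
  rw [Multiset.pair_comm z x]; exact Multiset.cons_swap _ _ _

theorem W_ex_sorted {n : ℕ} (x y z : Fin n) (h1 : x.val ≤ y.val)
    (h2 : y.val ≤ z.val) :
    ∃ p q r : Fin n, Wn n p q r ∧ ({p, q, r} : Multiset (Fin n)) = {x, y, z} := by
  by_cases h : z.val ≤ x.val
  · refine ⟨x, y, z, ?_, rfl⟩
    unfold Wn cdiff Bs
    split_ifs <;> omega
  · have hz := z.2
    have e1 : cdiff n x y = y.val - x.val := by unfold cdiff; split_ifs; rfl
    have e2 : cdiff n y z = z.val - y.val := by unfold cdiff; split_ifs; rfl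
    have e3 : cdiff n z x = x.val + n - z.val := by unfold cdiff; split_ifs; rfl
    have hs : cdiff n x y + cdiff n y z + cdiff n z x = n := by omega
    rcases Bs_ex hs with h | h | h
    · exact ⟨x, y, z, h, rfl⟩
    · exact ⟨y, z, x, h, mset_rot _ _ _⟩
    · exact ⟨z, x, y, h, (mset_rot _ _ _).symm⟩

theorem W_ex {n : ℕ} (x y z : Fin n) :
    ∃ p q r : Fin n, Wn n p q r ∧ ({p, q, r} : Multiset (Fin n)) = {x, y, z} := by
  have sw : ∀ a b c : Fin n, ({b, a, c} : Multiset (Fin n)) = {a, b, c} :=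
    fun a b c => Multiset.cons_swap _ _ _
  rcases le_total x.val y.val with h1 | h1 <;> rcases le_total y.val z.val with h2 | h2 <;>
    rcases le_total x.val z.val with h4 | h4
  · exact W_ex_sorted x y z h1 h2
  · exact W_ex_sorted x y z h1 h2
  · rw [Multiset.pair_comm y z]; exact W_ex_sorted x z y h4 h2
  · rw [← mset_rot, ← mset_rot]; exact W_ex_sorted z x y h4 h1
  · rw [← sw]; exact W_ex_sorted y x z h1 h4
  · rw [← mset_rot]; exact W_ex_sorted y z x h2 h4
  · rw [← mset_rot, ← mset_rot, Multiset.pair_comm]; exact W_ex_sorted z y x h2 h1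
  · rw [← mset_rot, ← mset_rot, Multiset.pair_comm]; exact W_ex_sorted z y x h2 h1

/-- the type of chosen windows -/
abbrev WE (n : ℕ) := {p : Fin n × Fin n × Fin n // Wn n p.1 p.2.1 p.2.2}

/-- The next window in the trivial (mirror) successor permutation. -/
def wnext {n : ℕ} (e : WE n) : WE n :=
  ⟨(e.1.2.1, e.1.2.2, ⟨if e.1.2.2.val + cdiff n e.1.1 e.1.2.1 < n
      then e.1.2.2.val + cdiff n e.1.1 e.1.2.1
      else e.1.2.2.val + cdiff n e.1.1 e.1.2.1 - n, by
        have := cdiff_lt e.1.1.2 e.1.2.1.2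
        have := e.1.2.2.2
        split_ifs <;> omega⟩), by
    have hd := cdiff_lt e.1.1.2 e.1.2.1.2
    have hz := e.1.2.2.2
    have h := Bs_symm e.2
    unfold Wn
    simp only
    generalize cdiff n e.1.1 e.1.2.1 = d at *
    convert h using 1
    unfold cdiff
    split_ifs <;> omega⟩

theorem wnext_inj {n : ℕ} : Function.Injective (wnext (n := n)) := by
  rintro ⟨⟨⟨x, hx⟩, ⟨y, hy⟩, ⟨z, hz⟩⟩, h⟩ ⟨⟨⟨p, hp⟩, ⟨q, hq⟩, ⟨r, hr⟩⟩, h'⟩ he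
  simp only [wnext, Subtype.mk.injEq, Prod.mk.injEq, Fin.mk.injEq] at he ⊢
  obtain ⟨rfl, rfl, he⟩ := he
  refine ⟨?_, rfl, rfl⟩
  have h1 := cdiff_lt hx hy
  have h2 := cdiff_lt hp hy
  have h4 : cdiff n x y = cdiff n p y := by
    split_ifs at he <;> omega
  unfold cdiff at h4
  split_ifs at h4 <;> omega

theorem W_conn {n : ℕ} (hn : 5 ≤ n) (P : Fin n × Fin n → Prop)
    (hP : ∀ e : WE n, P (e.1.1, e.1.2.1) ↔ P (e.1.2.1, e.1.2.2)) (e f : WE n)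
    (he : P (e.1.1, e.1.2.1)) : P (f.1.1, f.1.2.1) := by
  have hW : ∀ x y z : Fin n, Wn n x y z → (P (x, y) ↔ P (y, z)) :=
    fun x y z h => hP ⟨(x, y, z), h⟩
  have hs : ∀ x y : Fin n, 2 * cdiff n x y < n → (P (x, x) ↔ P (x, y)) := by
    intro x y h
    apply hW
    have : cdiff n x x = 0 := by simp [cdiff]
    unfold Wn
    rw [this]
    unfold Bs
    omega
  have hs' : ∀ x y : Fin n, 2 * cdiff n x y < n → (P (x, y) ↔ P (y, y)) := by
    intro x y h
    apply hW
    have : cdiff n y y = 0 := by simp [cdiff]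
    unfold Wn
    rw [this]
    unfold Bs
    omega
  have hdiag : ∀ k (hk : k < n), P (⟨k, hk⟩, ⟨k, hk⟩) ↔ P (⟨0, by omega⟩, ⟨0, by omega⟩) := by
    intro k
    induction k with
    | zero => intro _; rfl
    | succ k ih =>
      intro hk
      rw [← ih (by omega)]
      have : 2 * cdiff n k (k + 1) < n := by
        unfold cdiff; split_ifs <;> omega
      rw [hs ⟨k, by omega⟩ ⟨k + 1, hk⟩ this, hs' ⟨k, by omega⟩ ⟨k + 1, hk⟩ this]
  have hd2 : ∀ x y : Fin n, P (x, x) ↔ P (y, y) :=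
    fun x y => (hdiag x.1 x.2).trans (hdiag y.1 y.2).symm
  have main : ∀ e : WE n, P (e.1.1, e.1.2.1) ↔ P (⟨0, by omega⟩, ⟨0, by omega⟩) := by
    rintro ⟨⟨x, y, z⟩, h⟩
    change P (x, y) ↔ _
    by_cases hc : 2 * cdiff n x y < n
    · rw [← hs x y hc]; exact hd2 _ _
    · have hxy : 2 * cdiff n x y = n := by
        change Bs n (cdiff n x y) (cdiff n y z) at h
        unfold Bs at h; omega
      have hx := x.2
      obtain ⟨w, hw⟩ : ∃ w : Fin n, cdiff n w x = 1 := by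
        by_cases h0 : x.val = 0
        · exact ⟨⟨n - 1, by omega⟩, by unfold cdiff; simp only; split_ifs <;> omega⟩
        · exact ⟨⟨x.val - 1, by omega⟩, by unfold cdiff; simp only; split_ifs <;> omega⟩
      have hw1 : P (w, x) ↔ P (x, y) := by
        apply hW
        unfold Wn
        rw [hw]
        unfold Bs
        omega
      rw [← hw1, ← hs w x (by omega)]
      exact hd2 _ _
  exact (main f).2 ((main e).1 he)

theorem mcycle_ge5 (n : ℕ) (hn : 5 ≤ n) (h3 : ¬ (3 ∣ n)) :
    ∃ a : ZMod ((n + 3 - 1).choose 3) → Fin n, IsMcycle n 3 a := by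
  let g : WE n → Sym (Fin n) 3 := fun e => ⟨{e.1.1, e.1.2.1, e.1.2.2}, by simp⟩
  have hg : Function.Bijective g := by
    constructor
    · rintro ⟨⟨x, y, z⟩, h⟩ ⟨⟨p, q, r⟩, h'⟩ he
      have := W_unique hn h3 h h' (congrArg Subtype.val he)
      obtain ⟨rfl, rfl, rfl⟩ := this
      rfl
    · rintro ⟨s, hs⟩
      obtain ⟨x, y, z, rfl⟩ := Multiset.card_eq_three.1 hs
      obtain ⟨p, q, r, h, hm⟩ := W_ex x y z
      exact ⟨⟨(p, q, r), h⟩, Subtype.ext hm⟩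
  have hcard : Nat.card (WE n) = (n + 3 - 1).choose 3 := by
    rw [Nat.card_eq_of_bijective g hg, Nat.card_eq_fintype_card, Sym.card_sym_eq_choose,
      Fintype.card_fin]
  let σ₀ : Equiv.Perm (WE n) := Equiv.ofBijective wnext (Finite.injective_iff_bijective.1 wnext_inj)
  obtain ⟨e₀, -⟩ := hg.2 ⟨{⟨0, by omega⟩, ⟨0, by omega⟩, ⟨0, by omega⟩}, by simp⟩
  obtain ⟨σ, hσ, hcyc⟩ := euler_perm (fun e : WE n => (e.1.1, e.1.2.1))
    (fun e : WE n => (e.1.2.1, e.1.2.2)) σ₀ (fun e => rfl)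
    (fun P hP e f => W_conn hn P hP e f) e₀
  obtain ⟨f, hf, hstep⟩ := cyc_param σ e₀ hcyc _ hcard
  simp only [Prod.mk.injEq] at hσ
  refine ⟨fun i => (f i).1.1, ?_⟩
  have hwin : ∀ i, (Multiset.range 3).map
      (fun j => (f (i + (j : ZMod ((n + 3 - 1).choose 3)))).1.1) = (g (f i)).1 := by
    intro i
    have e1 : (f (i + 1)).1.1 = (f i).1.2.1 := by rw [hstep]; exact (hσ _).1
    have e2 : (f (i + 2)).1.1 = (f i).1.2.2 := by
      have : i + 2 = i + 1 + 1 := by ring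
      rw [this, hstep, (hσ _).1, hstep, (hσ _).2]
    have hr : Multiset.range 3 = {0, 1, 2} := by decide
    rw [hr]
    simp only [Multiset.insert_eq_cons, Multiset.map_cons, Multiset.map_singleton, g,
      Multiset.bind_def, Multiset.pure_def, Multiset.cons_bind, Multiset.singleton_bind,
      Multiset.singleton_add,
      Nat.cast_zero, add_zero, Nat.cast_one, Nat.cast_ofNat, e1, e2]
  intro s hs
  obtain ⟨i, hi, hu⟩ := (hg.comp hf).existsUnique ⟨s, hs⟩
  refine ⟨i, ?_, ?_⟩
  · change Multiset.map _ _ = s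
    rw [hwin]
    exact congrArg Subtype.val hi
  · intro j hj
    apply hu
    apply Subtype.ext
    change Multiset.map _ _ = s at hj
    rw [hwin] at hj
    exact hj

/-- an explicit cycle for `n = 4` -/
def seq4 : Fin 20 → Fin 4 := ![0, 0, 0, 1, 1, 1, 2, 0, 2, 0, 3, 1, 3, 1, 2, 2, 2, 3, 3, 3]

set_option maxRecDepth 100000 in
theorem seq4_spec : ∀ x y z : Fin 4, ∃ i : Fin 20,
    ({seq4 i, seq4 (i + 1), seq4 (i + 2)} : Multiset (Fin 4)) = {x, y, z} ∧
    ∀ j : Fin 20, ({seq4 j, seq4 (j + 1), seq4 (j + 2)} : Multiset (Fin 4)) = {x, y, z} → j = i := by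
  decide

theorem mcycle_4 : ∃ a : ZMod ((4 + 3 - 1).choose 3) → Fin 4, IsMcycle 4 3 a := by
  refine ⟨fun i => seq4 i, ?_⟩
  intro s hs
  obtain ⟨x, y, z, rfl⟩ := Multiset.card_eq_three.1 hs
  have hwin : ∀ i : ZMod 20, (Multiset.range 3).map
      (fun j => seq4 (i + (j : ZMod 20) : ZMod 20)) =
        {seq4 i, seq4 (i + 1 : ZMod 20), seq4 (i + 2 : ZMod 20)} := by
    intro i
    have hr : Multiset.range 3 = {0, 1, 2} := by decide
    rw [hr]
    simp only [Multiset.insert_eq_cons, Multiset.map_cons, Multiset.map_singleton,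
      Multiset.bind_def, Multiset.pure_def, Multiset.cons_bind, Multiset.singleton_bind,
      Multiset.singleton_add, Nat.cast_zero, add_zero, Nat.cast_one, Nat.cast_ofNat]
  obtain ⟨i, hi, hu⟩ := seq4_spec x y z
  exact ⟨i, (hwin i).trans hi, fun j hj => hu j ((hwin j).symm.trans hj)⟩

theorem three_mcycle_exists (n : ℕ) (hn : 4 ≤ n) (h3 : ¬ (3 ∣ n)) :
    ∃ a : ZMod ((n + 3 - 1).choose 3) → Fin n, IsMcycle n 3 a := by
  rcases Nat.lt_or_ge n 5 with h | h
  · obtain rfl : n = 4 := by omega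
    exact mcycle_4
  · exact mcycle_ge5 n h h3
end

section
/- For every integer n ≥ 5 with gcd(n, 4) = 1, a 4-Mcycle of [n] exists. -/
namespace MC

/-- The gap `n - x - y - z` is the largest gap occurring exactly once. -/
def Good (n x y z : ℕ) : Prop :=
  x + y + z ≤ n ∧ n ≠ x + y + z + x ∧ n ≠ x + y + z + y ∧ n ≠ x + y + z + z ∧
  (x + (x + y + z) < n ∨ x = y ∨ x = z) ∧
  (y + (x + y + z) < n ∨ y = x ∨ y = z) ∧
  (z + (x + y + z) < n ∨ z = x ∨ z = y)

/-- Reduction modulo `n` of numbers below `2n`. -/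
def w (n x : ℕ) : ℕ := if x < n then x else x - n

theorem w_lt {n x : ℕ} (h : x < 2 * n) : w n x < n := by
  unfold w; split_ifs <;> omega

theorem w_w {n x y : ℕ} (h : x + y < 2 * n) : w n (w n x + y) = w n (x + y) := by
  unfold w; split_ifs <;> omega

theorem Good.rot {n x y z : ℕ} (h : Good n x y z) : Good n y z x := by
  unfold Good at *; omega

/-- Connectivity of the transition graph. -/
theorem connected (n : ℕ) (hn : 5 ≤ n) (hodd : n % 2 = 1) (Q : ℕ → ℕ → ℕ → Prop)
    (h0 : Q 0 0 0)
    (hQ : ∀ a x y z, a < n → Good n x y z → (Q a x y ↔ Q (w n (a + x)) y z)) :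
    ∀ a x y z, a < n → Good n x y z → Q a x y := by
  have w0 : ∀ a, a < n → w n a = a := fun a ha => by simp [w, ha]
  have s1 : ∀ a, a < n → Q a 0 0 := by
    intro a
    induction a with
    | zero => intro _; exact h0
    | succ a ih =>
      intro ha
      have ha' : a < n := by omega
      have i0 := ih ha'
      have g1 : Good n 0 0 1 := by unfold Good; omega
      have i1 := (hQ a 0 0 1 ha' g1).1 i0
      rw [Nat.add_zero, w0 a ha'] at i1
      have i2 := (hQ a 0 1 0 ha' g1.rot).1 i1
      rw [Nat.add_zero, w0 a ha'] at i2
      have i3 := (hQ a 1 0 0 ha' g1.rot.rot).1 i2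
      rwa [w0 _ ha] at i3
  have s2 : ∀ a x, a < n → 2 * x < n → Q a 0 x := by
    intro a x ha hx
    have g : Good n 0 0 x := by unfold Good; omega
    have i1 := (hQ a 0 0 x ha g).1 (s1 a ha)
    rwa [Nat.add_zero, w0 a ha] at i1
  have s3 : ∀ a x y, a < n → 2 * x + y < n → x + 2 * y < n → Q a x y := by
    intro a x y ha hx hy
    have g : Good n 0 x y := by unfold Good; omega
    have i1 := (hQ a 0 x y ha g).1 (s2 a x ha (by omega))
    rwa [Nat.add_zero, w0 a ha] at i1
  intro a x y z ha g
  have b1 : w n (a + x) < n := w_lt (by unfold Good at g; omega)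
  have b2 : w n (w n (a + x) + y) < n := w_lt (by unfold Good at g; omega)
  have key : (2 * x + y < n ∧ x + 2 * y < n) ∨ (2 * y + z < n ∧ y + 2 * z < n) ∨
      (2 * z + x < n ∧ z + 2 * x < n) ∨ (x = y ∧ y = z ∧ 3 * x = n) := by
    unfold Good at g; omega
  rcases key with k | k | k | k
  · exact s3 a x y ha k.1 k.2
  · exact (hQ a x y z ha g).2 (s3 _ _ _ b1 k.1 k.2)
  · exact (hQ a x y z ha g).2 ((hQ _ y z x b1 g.rot).2 (s3 _ _ _ b2 k.1 k.2))
  · obtain ⟨rfl, rfl, k⟩ := k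
    have g' : Good n x x 1 := by unfold Good; omega
    exact (hQ a x x 1 ha g').2 (s3 _ _ _ b1 (by omega) (by omega))

/-- Merging cycles: an Eulerian circuit as a permutation of the edges. -/
theorem euler {E V : Type*} [Finite E] (src tgt : E → V) (σ : Equiv.Perm E)
    (hσ : ∀ e, src (σ e) = tgt e) (e0 : E)
    (hconn : ∀ C : E → Prop, C e0 → (∀ e f, tgt e = tgt f → C e → C f) →
      (∀ (τ : Equiv.Perm E), (∀ e, src (τ e) = tgt e) → (∀ e, C e ↔ C (τ e)) → ∀ e, C e)) :
    ∃ τ : Equiv.Perm E, (∀ e, src (τ e) = tgt e) ∧ ∀ e, τ.SameCycle e0 e := by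
  classical
  have hfin : Finite {τ : Equiv.Perm E // ∀ e, src (τ e) = tgt e} := inferInstance
  have : Nonempty {τ : Equiv.Perm E // ∀ e, src (τ e) = tgt e} := ⟨⟨σ, hσ⟩⟩
  obtain ⟨⟨τ, hτ⟩, hmax⟩ := Finite.exists_max
    (fun τ : {τ : Equiv.Perm E // ∀ e, src (τ e) = tgt e} => {x | τ.1.SameCycle e0 x}.ncard)
  refine ⟨τ, hτ, ?_⟩
  refine hconn (fun e => τ.SameCycle e0 e) (Equiv.Perm.SameCycle.refl _ _) ?_ τ hτ
    (fun e => Equiv.Perm.sameCycle_apply_right.symm)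
  intro e f hef he
  by_contra hf
  let ρ : Equiv.Perm E := τ * Equiv.swap e f
  have hρ : ∀ x, src (ρ x) = tgt x := by
    intro x
    simp only [ρ, Equiv.Perm.mul_apply, hτ]
    by_cases h1 : x = e
    · subst h1; simp [hef]
    · by_cases h2 : x = f
      · subst h2; simp [hef]
      · rw [Equiv.swap_apply_of_ne_of_ne h1 h2]
  have hρf : ρ f = τ e := by simp [ρ]
  have hstep : ∀ i : ℕ, ρ.SameCycle (τ e) ((τ ^ i) (τ e)) := by
    intro i
    induction i with
    | zero => exact Equiv.Perm.SameCycle.refl _ _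
    | succ i ih =>
      rw [pow_succ', Equiv.Perm.mul_apply]
      set y := (τ ^ i) (τ e) with hy
      have hyC : τ.SameCycle e0 y := by
        rw [hy, Equiv.Perm.sameCycle_pow_right, Equiv.Perm.sameCycle_apply_right]; exact he
      by_cases h1 : y = e
      · rw [h1]
      · have h2 : y ≠ f := fun h => hf (h ▸ hyC)
        have : ρ y = τ y := by
          simp only [ρ, Equiv.Perm.mul_apply, Equiv.swap_apply_of_ne_of_ne h1 h2]
        rw [← this, Equiv.Perm.sameCycle_apply_right]; exact ih
  have hall : ∀ x, τ.SameCycle e0 x → ρ.SameCycle (τ e) x := by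
    intro x hx
    have h1 : τ.SameCycle (τ e) x :=
      (Equiv.Perm.sameCycle_apply_left.2 (he.symm.trans hx))
    obtain ⟨i, -, hi⟩ := h1.exists_pow_eq'
    rw [← hi]; exact hstep i
  have hlt : {x | τ.SameCycle e0 x}.ncard < {x | ρ.SameCycle e0 x}.ncard := by
    apply Set.ncard_lt_ncard _ (Set.toFinite _)
    have he0 := (hall e0 (Equiv.Perm.SameCycle.refl _ _)).symm
    refine ⟨fun x hx => he0.trans (hall x hx), fun h => hf (h ?_)⟩
    show ρ.SameCycle e0 f
    rw [← Equiv.Perm.sameCycle_apply_right, hρf]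
    exact he0
  exact absurd (hmax ⟨ρ, hρ⟩) (not_le.2 hlt)

/-- Edges of the transition graph: a starting point and three gaps. -/
structure Ed (n : ℕ) where
  a : ℕ
  x : ℕ
  y : ℕ
  z : ℕ
  ha : a < n
  g : Good n x y z

theorem Ed.ext' {n : ℕ} {e f : Ed n} (h1 : e.a = f.a) (h2 : e.x = f.x) (h3 : e.y = f.y)
    (h4 : e.z = f.z) : e = f := by
  cases e; cases f; simp_all

theorem Ed.bd {n : ℕ} (e : Ed n) : e.a + e.x + e.y + e.z < 2 * n := by
  have := e.ha; have := e.g.1; omega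

/-- The window (as a list) of an edge. -/
def win {n : ℕ} (e : Ed n) : List (Fin n) :=
  [⟨e.a, e.ha⟩, ⟨w n (e.a + e.x), w_lt (by have := e.bd; omega)⟩,
   ⟨w n (e.a + e.x + e.y), w_lt (by have := e.bd; omega)⟩,
   ⟨w n (e.a + e.x + e.y + e.z), w_lt e.bd⟩]

/-- Sorted form of the window of an edge. -/
def SF (n : ℕ) (e : Ed n) (p q r s : ℕ) : Prop :=
  (e.a = p ∧ e.a + e.x = q ∧ e.a + e.x + e.y = r ∧ e.a + e.x + e.y + e.z = s) ∨
  (e.a = q ∧ e.a + e.x = r ∧ e.a + e.x + e.y = s ∧ e.a + e.x + e.y + e.z = p + n) ∨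
  (e.a = r ∧ e.a + e.x = s ∧ e.a + e.x + e.y = p + n ∧ e.a + e.x + e.y + e.z = q + n) ∨
  (e.a = s ∧ e.a + e.x = p + n ∧ e.a + e.x + e.y = q + n ∧ e.a + e.x + e.y + e.z = r + n)

theorem exists_SF {n : ℕ} (e : Ed n) : ∃ p q r s, p ≤ q ∧ q ≤ r ∧ r ≤ s ∧ s < n ∧ SF n e p q r s := by
  have h1 := e.bd
  have h2 := e.ha
  have h3 := e.g.1
  unfold SF
  by_cases c1 : e.a + e.x + e.y + e.z < n
  · exact ⟨e.a, e.a + e.x, e.a + e.x + e.y, e.a + e.x + e.y + e.z, by omega⟩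
  by_cases c2 : e.a + e.x + e.y < n
  · exact ⟨e.a + e.x + e.y + e.z - n, e.a, e.a + e.x, e.a + e.x + e.y, by omega⟩
  by_cases c3 : e.a + e.x < n
  · exact ⟨e.a + e.x + e.y - n, e.a + e.x + e.y + e.z - n, e.a, e.a + e.x, by omega⟩
  · exact ⟨e.a + e.x - n, e.a + e.x + e.y - n, e.a + e.x + e.y + e.z - n, e.a, by omega⟩

theorem SF_perm {n : ℕ} (e : Ed n) {p q r s : ℕ} (_h1 : p ≤ q) (h2 : q ≤ r) (h3 : r ≤ s)
    (h4 : s < n) (h : SF n e p q r s) : ((win e).map Fin.val).Perm [p, q, r, s] := by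
  have wa : ∀ x, x < n → w n x = x := fun x hx => by simp [w, hx]
  have wb : ∀ x, w n (x + n) = x := fun x => by simp [w]
  simp only [win, List.map_cons, List.map_nil]
  rcases h with h | h | h | h <;> obtain ⟨k1, k2, k3, k4⟩ := h
  · rw [k4, k3, k2, k1, wa q (by omega), wa r (by omega), wa s (by omega)]
  · rw [k4, k3, k2, k1, wb, wa r (by omega), wa s (by omega)]
    exact List.perm_append_comm (l₁ := [q, r, s]) (l₂ := [p])
  · rw [k4, k3, k2, k1, wb, wb, wa s (by omega)]
    exact List.perm_append_comm (l₁ := [r, s]) (l₂ := [p, q])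
  · rw [k4, k3, k2, k1, wb, wb, wb]
    exact List.perm_append_comm (l₁ := [s]) (l₂ := [p, q, r])

/-- `D` is the largest value occurring exactly once among `A, B, C, D`. -/
def U (A B C D : ℕ) : Prop :=
  D ≠ A ∧ D ≠ B ∧ D ≠ C ∧ (A < D ∨ A = B ∨ A = C) ∧ (B < D ∨ B = A ∨ B = C) ∧
  (C < D ∨ C = A ∨ C = B)

theorem Good_iff {n A B C D : ℕ} (h : A + B + C + D = n) : Good n A B C ↔ U A B C D := by
  subst h
  have e1 : A + B + C + D ≠ A + B + C + A ↔ D ≠ A := by omega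
  have e2 : A + B + C + D ≠ A + B + C + B ↔ D ≠ B := by omega
  have e3 : A + B + C + D ≠ A + B + C + C ↔ D ≠ C := by omega
  have e4 : A + (A + B + C) < A + B + C + D ↔ A < D := by omega
  have e5 : B + (A + B + C) < A + B + C + D ↔ B < D := by omega
  have e6 : C + (A + B + C) < A + B + C + D ↔ C < D := by omega
  unfold Good U
  rw [e1, e2, e3, e4, e5, e6]
  simp

theorem U_exists (A B C D : ℕ) (h : (A + B + C + D) % 2 = 1) :
    U A B C D ∨ U B C D A ∨ U C D A B ∨ U D A B C := by
  unfold U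
  rcases lt_trichotomy A B with h1 | h1 | h1 <;> rcases lt_trichotomy A C with h2 | h2 | h2 <;>
  rcases lt_trichotomy A D with h3 | h3 | h3 <;> rcases lt_trichotomy B C with h4 | h4 | h4 <;>
  rcases lt_trichotomy B D with h5 | h5 | h5 <;> rcases lt_trichotomy C D with h6 | h6 | h6 <;>
  omega

theorem U_excl1 {A B C D : ℕ} (h : U A B C D) (h' : U B C D A) : False := by
  unfold U at *; omega

theorem U_excl2 {A B C D : ℕ} (h : U A B C D) (h' : U C D A B) : False := by
  unfold U at *; omega

theorem SF_inj {n : ℕ} (hodd : n % 2 = 1) (e f : Ed n) {p q r s : ℕ} (h1 : p ≤ q) (h2 : q ≤ r)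
    (h3 : r ≤ s) (h4 : s < n) (he : SF n e p q r s) (hf : SF n f p q r s) : e = f := by
  have ge := e.g
  have gf := f.g
  have : e.a = f.a ∧ e.x = f.x ∧ e.y = f.y ∧ e.z = f.z := by
    have hU : ∀ e : Ed n, SF n e p q r s →
        (U (q - p) (r - q) (s - r) (n + p - s) ∧ e.a = p ∧ e.x = q - p ∧ e.y = r - q ∧
          e.z = s - r) ∨
        (U (r - q) (s - r) (n + p - s) (q - p) ∧ e.a = q ∧ e.x = r - q ∧ e.y = s - r ∧
          e.z = n + p - s) ∨
        (U (s - r) (n + p - s) (q - p) (r - q) ∧ e.a = r ∧ e.x = s - r ∧ e.y = n + p - s ∧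
          e.z = q - p) ∨
        (U (n + p - s) (q - p) (r - q) (s - r) ∧ e.a = s ∧ e.x = n + p - s ∧ e.y = q - p ∧
          e.z = r - q) := by
      intro e he
      have g := e.g
      unfold SF at he
      rcases he with ⟨k1, k2, k3, k4⟩ | ⟨k1, k2, k3, k4⟩ | ⟨k1, k2, k3, k4⟩ | ⟨k1, k2, k3, k4⟩
      · have m1 : e.x = q - p := by omega
        have m2 : e.y = r - q := by omega
        have m3 : e.z = s - r := by omega
        rw [m1, m2, m3, Good_iff (D := n + p - s) (by omega)] at g
        exact Or.inl ⟨g, k1, m1, m2, m3⟩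
      · have m1 : e.x = r - q := by omega
        have m2 : e.y = s - r := by omega
        have m3 : e.z = n + p - s := by omega
        rw [m1, m2, m3, Good_iff (D := q - p) (by omega)] at g
        exact Or.inr (Or.inl ⟨g, k1, m1, m2, m3⟩)
      · have m1 : e.x = s - r := by omega
        have m2 : e.y = n + p - s := by omega
        have m3 : e.z = q - p := by omega
        rw [m1, m2, m3, Good_iff (D := r - q) (by omega)] at g
        exact Or.inr (Or.inr (Or.inl ⟨g, k1, m1, m2, m3⟩))
      · have m1 : e.x = n + p - s := by omega
        have m2 : e.y = q - p := by omega
        have m3 : e.z = r - q := by omega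
        rw [m1, m2, m3, Good_iff (D := s - r) (by omega)] at g
        exact Or.inr (Or.inr (Or.inr ⟨g, k1, m1, m2, m3⟩))
    rcases hU e he with ⟨u, k1, k2, k3, k4⟩ | ⟨u, k1, k2, k3, k4⟩ | ⟨u, k1, k2, k3, k4⟩ |
      ⟨u, k1, k2, k3, k4⟩ <;>
    rcases hU f hf with ⟨v, l1, l2, l3, l4⟩ | ⟨v, l1, l2, l3, l4⟩ | ⟨v, l1, l2, l3, l4⟩ |
      ⟨v, l1, l2, l3, l4⟩ <;>
    first
    | exact ⟨k1.trans l1.symm, k2.trans l2.symm, k3.trans l3.symm, k4.trans l4.symm⟩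
    | exact (U_excl1 u v).elim
    | exact (U_excl1 v u).elim
    | exact (U_excl2 u v).elim
  exact Ed.ext' this.1 this.2.1 this.2.2.1 this.2.2.2

theorem win_inj {n : ℕ} (hodd : n % 2 = 1) (e f : Ed n)
    (h : (win e : Multiset (Fin n)) = (win f : Multiset (Fin n))) : e = f := by
  rw [Multiset.coe_eq_coe] at h
  obtain ⟨p, q, r, s, h1, h2, h3, h4, he⟩ := exists_SF e
  obtain ⟨p', q', r', s', h1', h2', h3', h4', hf⟩ := exists_SF f
  have k : [p, q, r, s].Perm [p', q', r', s'] :=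
    ((SF_perm e h1 h2 h3 h4 he).symm.trans (h.map _)).trans (SF_perm f h1' h2' h3' h4' hf)
  have k2 : [p, q, r, s] = [p', q', r', s'] := by
    apply k.eq_of_pairwise' (r := (· ≤ ·))
    · simp; omega
    · simp; omega
  simp only [List.cons.injEq, and_true] at k2
  obtain ⟨rfl, rfl, rfl, rfl⟩ := k2
  exact SF_inj hodd e f h1 h2 h3 h4 he hf

theorem win_surj {n : ℕ} (hodd : n % 2 = 1) (m : Multiset (Fin n)) (hm : Multiset.card m = 4) :
    ∃ e : Ed n, (win e : Multiset (Fin n)) = m := by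
  have hl : (m.sort (· ≤ ·)).length = 4 := by simp [hm]
  have hs := Multiset.pairwise_sort m (· ≤ ·)
  have hme := Multiset.sort_eq m (· ≤ ·)
  obtain ⟨P, Q, R, S, hL⟩ : ∃ P Q R S, m.sort (· ≤ ·) = [P, Q, R, S] := by
    generalize m.sort (· ≤ ·) = l at hl
    match l, hl with
    | [P, Q, R, S], _ => exact ⟨P, Q, R, S, rfl⟩
  rw [hL] at hs hme
  obtain ⟨p, hp⟩ := P
  obtain ⟨q, hq⟩ := Q
  obtain ⟨r, hr⟩ := R
  obtain ⟨s, hs'⟩ := S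
  simp at hs
  have h1 : p ≤ q := by omega
  have h2 : q ≤ r := by omega
  have h3 : r ≤ s := by omega
  clear hs
  suffices ∃ e : Ed n, SF n e p q r s by
    obtain ⟨e, he⟩ := this
    refine ⟨e, ?_⟩
    rw [← hme, Multiset.coe_eq_coe]
    have := SF_perm e h1 h2 h3 hs' he
    exact (List.map_perm_map_iff Fin.val_injective).1 this
  have key : Good n (q - p) (r - q) (s - r) ∨ Good n (r - q) (s - r) (n + p - s) ∨
      Good n (s - r) (n + p - s) (q - p) ∨ Good n (n + p - s) (q - p) (r - q) := by
    have hU := U_exists (q - p) (r - q) (s - r) (n + p - s) (by omega)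
    rw [Good_iff (D := n + p - s) (by omega), Good_iff (D := q - p) (by omega),
      Good_iff (D := r - q) (by omega), Good_iff (D := s - r) (by omega)]
    exact hU
  rcases key with g | g | g | g
  · exact ⟨⟨p, _, _, _, hp, g⟩, Or.inl ⟨rfl, by simp only; omega, by simp only; omega,
      by simp only; omega⟩⟩
  · exact ⟨⟨q, _, _, _, hq, g⟩, Or.inr (Or.inl ⟨rfl, by simp only; omega, by simp only; omega,
      by simp only; omega⟩)⟩
  · exact ⟨⟨r, _, _, _, hr, g⟩, Or.inr (Or.inr (Or.inl ⟨rfl, by simp only; omega, by simp only; omega,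
      by simp only; omega⟩))⟩
  · exact ⟨⟨s, _, _, _, hs', g⟩, Or.inr (Or.inr (Or.inr ⟨rfl, by simp only; omega, by simp only; omega,
      by simp only; omega⟩))⟩

/-- The window of an edge as an element of the symmetric power. -/
def symWin {n : ℕ} (e : Ed n) : Sym (Fin n) 4 := ⟨(win e : Multiset (Fin n)), by simp [win]⟩

theorem symWin_bij {n : ℕ} (hodd : n % 2 = 1) : Function.Bijective (symWin (n := n)) := by
  constructor
  · intro e f h
    exact win_inj hodd e f (congrArg Subtype.val h)
  · intro ⟨m, hm⟩
    obtain ⟨e, he⟩ := win_surj hodd m hm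
    exact ⟨e, Subtype.ext he⟩

/-- Rotation of an edge. -/
def rot {n : ℕ} (e : Ed n) : Ed n :=
  ⟨w n (e.a + e.x), e.y, e.z, e.x, w_lt (by have := e.bd; omega), e.g.rot⟩

theorem rot_inj {n : ℕ} : Function.Injective (rot (n := n)) := by
  intro e f h
  simp only [rot, Ed.mk.injEq] at h
  obtain ⟨h1, h2, h3, h4⟩ := h
  refine Ed.ext' ?_ h4 h2 h3
  have := e.ha
  have := f.ha
  have := e.bd
  have := f.bd
  have := e.g
  have := f.g
  rw [h4] at h1
  unfold w Good at *
  split_ifs at h1 <;> omega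

def src {n : ℕ} (e : Ed n) : ℕ × ℕ × ℕ := (e.a, e.x, e.y)
def tgt {n : ℕ} (e : Ed n) : ℕ × ℕ × ℕ := (w n (e.a + e.x), e.y, e.z)

theorem exists_perm (n : ℕ) (hn : 5 ≤ n) (hodd : n % 2 = 1) [Finite (Ed n)] :
    ∃ (e0 : Ed n) (τ : Equiv.Perm (Ed n)), (∀ e, src (τ e) = tgt e) ∧
      ∀ e, τ.SameCycle e0 e := by
  have g0 : Good n 0 0 0 := by unfold Good; omega
  let e0 : Ed n := ⟨0, 0, 0, 0, by omega, g0⟩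
  refine ⟨e0, ?_⟩
  refine euler src tgt (Equiv.ofBijective rot (Finite.injective_iff_bijective.1 rot_inj))
    (fun e => rfl) e0 ?_
  intro C hC0 hC τ hτ hCτ
  have hsrc : ∀ e f, src e = src f → C e → C f := by
    intro e f hef he
    have h1 : tgt (τ.symm e) = tgt (τ.symm f) := by
      rw [← hτ, ← hτ]; simpa using hef
    have h2 : C (τ.symm e) := by rw [hCτ]; simpa using he
    have h3 := hC _ _ h1 h2
    rw [hCτ] at h3
    simpa using h3
  have main := connected n hn hodd (fun a x y => ∃ e : Ed n, C e ∧ src e = (a, x, y))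
    ⟨e0, hC0, rfl⟩ (by
      intro a x y z ha g
      let e : Ed n := ⟨a, x, y, z, ha, g⟩
      constructor
      · rintro ⟨f, hf, hs⟩
        have he : C e := hsrc f e hs hf
        exact ⟨τ e, (hCτ e).1 he, hτ e⟩
      · rintro ⟨f, hf, hs⟩
        have h1 : C (τ e) := hsrc f (τ e) (hs.trans (hτ e).symm) hf
        exact ⟨e, (hCτ e).2 h1, rfl⟩)
  intro e
  obtain ⟨f, hf, hs⟩ := main e.a e.x e.y e.z e.ha e.g
  exact hsrc f e hs hf

theorem win_eq {n : ℕ} (τ : Equiv.Perm (Ed n)) (hτ : ∀ e, src (τ e) = tgt e) (e : Ed n) :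
    (Multiset.range 4).map (fun j => (⟨((τ ^ j) e).a, ((τ ^ j) e).ha⟩ : Fin n)) =
      (win e : Multiset (Fin n)) := by
  have hstep : ∀ e : Ed n, (τ e).a = w n (e.a + e.x) ∧ (τ e).x = e.y ∧ (τ e).y = e.z := by
    intro e
    have := hτ e
    simpa [src, tgt] using this
  have hb := e.bd
  have a1 : ((τ ^ 1) e).a = w n (e.a + e.x) := by simpa using (hstep e).1
  have a2 : ((τ ^ 2) e).a = w n (e.a + e.x + e.y) := by
    rw [pow_two, Equiv.Perm.mul_apply, (hstep _).1, (hstep e).1, (hstep e).2.1]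
    exact w_w (by omega)
  have a3 : ((τ ^ 3) e).a = w n (e.a + e.x + e.y + e.z) := by
    rw [pow_succ', Equiv.Perm.mul_apply, (hstep _).1, a2, pow_two, Equiv.Perm.mul_apply,
      (hstep (τ e)).2.1, (hstep e).2.2]
    exact w_w (by omega)
  have hr : Multiset.range 4 = (([0, 1, 2, 3] : List ℕ) : Multiset ℕ) := rfl
  rw [hr, Multiset.map_coe]
  simp only [List.map_cons, List.map_nil, a1, a2, a3, win, pow_zero, Equiv.Perm.one_apply]

end MC

theorem four_mcycle_exists (n : ℕ) (hn : 5 ≤ n) (h4 : Nat.gcd n 4 = 1) :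
    ∃ a : ZMod ((n + 4 - 1).choose 4) → Fin n, IsMcycle n 4 a := by
  have hodd : n % 2 = 1 := by
    by_contra h
    have h1 : 2 ∣ Nat.gcd n 4 := Nat.dvd_gcd (by omega) (by norm_num)
    rw [h4] at h1
    omega
  have hbij := MC.symWin_bij hodd
  have : Finite (MC.Ed n) := Finite.of_injective _ hbij.1
  have : Fintype (MC.Ed n) := Fintype.ofFinite _
  have hcard : Fintype.card (MC.Ed n) = (n + 4 - 1).choose 4 := by
    rw [Fintype.card_of_bijective hbij, Sym.card_sym_eq_choose, Fintype.card_fin]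
  obtain ⟨e0, τ, hτ, hc⟩ := MC.exists_perm n hn hodd
  unfold IsMcycle
  rw [← hcard]
  set m := Fintype.card (MC.Ed n) with hm
  have : NeZero m := ⟨by rw [hm]; exact (Fintype.card_pos_iff.2 ⟨e0⟩).ne'⟩
  have hcyc : τ.IsCycleOn ((Finset.univ : Finset (MC.Ed n)) : Set (MC.Ed n)) := by
    refine ⟨?_, fun x _ y _ => (hc x).symm.trans (hc y)⟩
    simp
  have hmod : ∀ i j : ℕ, (τ ^ i) e0 = (τ ^ j) e0 ↔ i ≡ j [MOD m] := fun i j => by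
    rw [hcyc.pow_apply_eq_pow_apply (Finset.mem_univ e0), Finset.card_univ]
  let b : ZMod m → MC.Ed n := fun i => (τ ^ i.val) e0
  have hb : ∀ (i : ZMod m) (j : ℕ), b (i + (j : ZMod m)) = (τ ^ j) (b i) := by
    intro i j
    simp only [b]
    rw [← Equiv.Perm.mul_apply, ← pow_add, hmod, ← ZMod.natCast_eq_natCast_iff]
    simp [add_comm]
  have hbinj : Function.Injective b := by
    intro i j h
    have := (hmod _ _).1 h
    rw [← ZMod.natCast_eq_natCast_iff] at this
    simpa using this
  have hbsurj : Function.Surjective b := by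
    intro e
    obtain ⟨k, -, hk⟩ := hcyc.exists_pow_eq (Finset.mem_univ e0) (Finset.mem_univ e)
    refine ⟨(k : ZMod m), ?_⟩
    rw [← hk]
    simp only [b]
    rw [hmod, ← ZMod.natCast_eq_natCast_iff]
    simp
  refine ⟨fun i => ⟨(b i).a, (b i).ha⟩, ?_⟩
  have hwin : ∀ i : ZMod m, (Multiset.range 4).map
      (fun j => (⟨(b (i + (j : ZMod m))).a, (b (i + (j : ZMod m))).ha⟩ : Fin n)) =
      (MC.win (b i) : Multiset (Fin n)) := by
    intro i
    rw [← MC.win_eq τ hτ (b i)]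
    have hcast := Multiset.bind_singleton (Multiset.range 4) (fun j : ℕ => (j : ZMod m))
    refine (congrArg (Multiset.map (fun j : ZMod m =>
      (⟨(b (i + j)).a, (b (i + j)).ha⟩ : Fin n))) hcast).trans ?_
    rw [Multiset.map_map]
    refine Multiset.map_congr rfl ?_
    intro j _
    apply Fin.ext
    exact congrArg MC.Ed.a (hb i j)
  intro s hs
  obtain ⟨e, he⟩ := MC.win_surj hodd s hs
  obtain ⟨i, rfl⟩ := hbsurj e
  refine ⟨i, (hwin i).trans he, ?_⟩
  intro j hj
  apply hbinj
  apply MC.win_inj hodd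
  rw [he, ← hwin j]
  exact hj
end

section
/- Let X be a 3-Ucycle of [n]. Then the number of unordered pairs of distinct elements of [n] that are missing from X is at most n/2. -/
/-- A `t`-Ucycle of `[n]`: a cyclic sequence of length `k = C(n, t)` of elements of
`[n]` (modeled as `Fin n`) such that every `t`-element subset of `[n]` appears
exactly once among the `k` cyclic windows of length `t`. -/
def IsUcycle (n t : ℕ) (b : ZMod (n.choose t) → Fin n) : Prop :=
  ∀ s : Finset (Fin n), s.card = t →
    ∃! i : ZMod (n.choose t),
      (Multiset.range t).map (fun j => b (i + (j : ZMod (n.choose t)))) = s.val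

lemma window_absurd {n : ℕ} (u v w a x y : Fin n)
    (hs : ({u, v, w} : Finset (Fin n)) = {a, x, y})
    (hax : a ≠ x) (hay : a ≠ y) (hxy : x ≠ y)
    (h1 : ({u, v} : Finset (Fin n)) ≠ {a, x}) (h2 : ({u, v} : Finset (Fin n)) ≠ {a, y})
    (h3 : ({v, w} : Finset (Fin n)) ≠ {a, x}) (h4 : ({v, w} : Finset (Fin n)) ≠ {a, y}) :
    False := by
  have e : ∀ z, z ∈ ({u, v, w} : Finset (Fin n)) ↔ z ∈ ({a, x, y} : Finset (Fin n)) := by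
    intro z; rw [hs]
  simp only [Finset.mem_insert, Finset.mem_singleton] at e
  have eu := (e u).1 (by simp)
  have ev := (e v).1 (by simp)
  have ew := (e w).1 (by simp)
  have ea := (e a).2 (by simp)
  have ex := (e x).2 (by simp)
  have ey := (e y).2 (by simp)
  clear e hs
  rcases eu with rfl | rfl | rfl <;> rcases ev with rfl | rfl | rfl <;>
    rcases ew with rfl | rfl | rfl <;> simp_all [Finset.pair_comm]

lemma missing_disjoint {n : ℕ} (b : ZMod (n.choose 3) → Fin n) (h : IsUcycle n 3 b)
    (p q : Finset (Fin n)) (hp : p.card = 2) (hq : q.card = 2) (hpq : p ≠ q)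
    (mp : ∀ i : ZMod (n.choose 3), ({b i, b (i + 1)} : Finset (Fin n)) ≠ p)
    (mq : ∀ i : ZMod (n.choose 3), ({b i, b (i + 1)} : Finset (Fin n)) ≠ q) :
    Disjoint p q := by
  have key : ∀ (r : Finset (Fin n)) (a : Fin n), r.card = 2 → a ∈ r →
      ∃ x, a ≠ x ∧ r = {a, x} := by
    intro r a hr ha
    obtain ⟨u, v, huv, rfl⟩ := Finset.card_eq_two.1 hr
    simp only [Finset.mem_insert, Finset.mem_singleton] at ha
    rcases ha with rfl | rfl
    · exact ⟨v, huv, rfl⟩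
    · exact ⟨u, huv.symm, Finset.pair_comm _ _⟩
  by_contra hd
  obtain ⟨a, hap, haq⟩ := Finset.not_disjoint_iff.1 hd
  obtain ⟨x, hax, rfl⟩ := key p a hp hap
  obtain ⟨y, hay, rfl⟩ := key q a hq haq
  have hxy : x ≠ y := by
    rintro rfl
    exact hpq rfl
  obtain ⟨i, hi, -⟩ := h {a, x, y} (Finset.card_eq_three.2 ⟨a, x, y, hax, hay, hxy, rfl⟩)
  have hs : ({b i, b (i + 1), b (i + 1 + 1)} : Finset (Fin n)) = {a, x, y} := by
    ext z
    have h2 : i + 1 + 1 = i + 2 := by ring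
    have e := congrArg (fun m : Multiset (Fin n) => z ∈ m) hi
    simp [Multiset.bind_def, Multiset.pure_def, Multiset.range_succ] at e
    simp only [Finset.mem_insert, Finset.mem_singleton, h2]
    rw [← e]
    tauto
  exact window_absurd _ _ _ a x y hs hax hay hxy (mp i) (mq i) (mp (i + 1)) (mq (i + 1))

/-- A 3-Ucycle of `[n]` is missing at most `n / 2` unordered pairs of letters. -/
theorem missing_pairs_le (n : ℕ) (hn : 0 < n) (b : ZMod (n.choose 3) → Fin n)
    (h : IsUcycle n 3 b) :
    Nat.card {p : Finset (Fin n) // p.card = 2 ∧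
      ∀ i : ZMod (n.choose 3), ({b i, b (i + 1)} : Finset (Fin n)) ≠ p} ≤ n / 2 := by
  classical
  rw [Nat.card_eq_fintype_card, Fintype.card_subtype]
  set M := Finset.univ.filter (fun p : Finset (Fin n) => p.card = 2 ∧
      ∀ i : ZMod (n.choose 3), ({b i, b (i + 1)} : Finset (Fin n)) ≠ p) with hM
  have hc : (M.biUnion id).card = ∑ p ∈ M, (id p).card := by
    apply Finset.card_biUnion
    intro p hp q hq hpq
    have hp := (Finset.mem_filter.1 (Finset.mem_coe.1 hp)).2
    have hq := (Finset.mem_filter.1 (Finset.mem_coe.1 hq)).2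
    exact missing_disjoint b h p q hp.1 hq.1 hpq hp.2 hq.2
  have hsum : ∑ p ∈ M, (id p).card = ∑ p ∈ M, 2 := by
    apply Finset.sum_congr rfl
    intro p hp
    simp only [hM, Finset.mem_filter, Finset.mem_univ, true_and] at hp
    exact hp.1
  have hle := Finset.card_le_univ (M.biUnion id)
  rw [hc, hsum, Finset.sum_const, smul_eq_mul, Fintype.card_fin] at hle
  omega
end

section
/- Let t ∈ {3, 4, 6} and let n be a positive integer with gcd(n, t) = 1. Then every multiset of t nonnegative integers whose sum is n contains an element that occurs in it with multiplicity exactly 1. -/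
/-- Peel off all copies of one element. -/
theorem peel_aux (s : Multiset ℕ) (h : ∀ x ∈ s, s.count x ≠ 1) :
    (s.card = 0 ∧ s.sum = 0) ∨ ∃ (k x : ℕ) (s' : Multiset ℕ), 2 ≤ k ∧
      (∀ y ∈ s', s'.count y ≠ 1) ∧ s.card = k + s'.card ∧ s.sum = k * x + s'.sum := by
  rcases s.empty_or_exists_mem with rfl | ⟨x, hx⟩
  · left; simp
  · right
    have e := Multiset.filter_add_not (fun y => y = x) s
    rw [Multiset.filter_eq'] at e
    refine ⟨s.count x, x, s.filter (fun y => ¬ y = x), ?_, ?_, ?_, ?_⟩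
    · have h1 := h x hx
      have h2 := Multiset.count_pos.2 hx
      omega
    · intro y hy
      rw [Multiset.mem_filter] at hy
      rw [Multiset.count_filter_of_pos (p := fun y => ¬ y = x) hy.2]
      exact h y hy.1
    · have := congrArg Multiset.card e
      rw [Multiset.card_add, Multiset.card_replicate] at this
      exact this.symm
    · have := congrArg Multiset.sum e
      rw [Multiset.sum_add, Multiset.sum_replicate, smul_eq_mul] at this
      exact this.symm

/-- For `t ∈ {3, 4, 6}` and `gcd(n, t) = 1`, every multiset of `t` nonnegative
integers summing to `n` has an element of multiplicity exactly 1 (i.e. every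
class of forms has a good pattern). -/
theorem good_pattern_of_gcd_one (t n : ℕ) (ht : t = 3 ∨ t = 4 ∨ t = 6)
    (hn : 0 < n) (hgcd : Nat.gcd n t = 1)
    (s : Multiset ℕ) (hcard : Multiset.card s = t) (hsum : s.sum = n) :
    ∃ x ∈ s, s.count x = 1 := by
  by_contra! h
  have hd : ∀ d, d ∣ t → d ∣ n → d = 1 := fun d h1 h2 =>
    Nat.dvd_one.1 (hgcd ▸ Nat.dvd_gcd h2 h1)
  have h2 := hd 2
  have h3 := hd 3
  clear hd hgcd
  have ht6 : t ≤ 6 := by omega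
  rcases peel_aux s h with ⟨c, e⟩ | ⟨k, x, s1, hk, h1, c1, e1⟩
  · omega
  rcases peel_aux s1 h1 with ⟨c, e⟩ | ⟨l, y, s2, hl, h2', c2, e2⟩
  · have : k = t := by omega
    subst this
    rcases ht with rfl | rfl | rfl <;> omega
  have hk4 : k ≤ 4 := by omega
  have hl4 : l ≤ 4 := by omega
  rcases peel_aux s2 h2' with ⟨c, e⟩ | ⟨m, z, s3, hm, h3', c3, e3⟩
  · interval_cases k <;> interval_cases l <;> omega
  have hk' : k = 2 := by omega
  have hl' : l = 2 := by omega
  have hm' : m = 2 := by omega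
  subst hk' hl' hm'
  rcases peel_aux s3 h3' with ⟨c, e⟩ | ⟨m, z, s3, hm, h3', c3, e3⟩ <;> omega
end

section
/- For every positive integer n, if a 2-Ucycle of [n] exists, then a 2-Mcycle of [n] exists. -/
/-- Duplicating one occurrence of `x` in a periodic sequence. -/
lemma mcycle_insert {α : Type*} (m : ℕ) (hm : 0 < m) (f : ℕ → α) (hf : ∀ i, f (i + m) = f i)
    (p : ℕ) : ∃ g : ℕ → α, (∀ i, g (i + (m + 1)) = g i) ∧
      (∀ i, ∃ j, g j = f i ∧ g (j + 1) = f (i + 1)) ∧ (∃ j, g j = f p ∧ g (j + 1) = f p) := by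
  have hmod : ∀ i, f (i % m) = f i := fun i => Function.Periodic.map_mod_nat hf i
  refine ⟨fun i => f (p + (i % (m + 1) - 1)), fun i => by simp, fun i => ?_, 0, ?_, ?_⟩
  · obtain ⟨j, hj, hji⟩ : ∃ j, j < m ∧ (p + j) % m = i % m := by
      refine ⟨(i + (m - p % m)) % m, Nat.mod_lt _ hm, ?_⟩
      have h1 : p % m < m := Nat.mod_lt _ hm
      have h2 : p + (i + (m - p % m)) = i + m * (p / m + 1) := by
        have := Nat.mod_add_div p m
        rw [mul_add]; omega
      rw [Nat.add_mod, Nat.mod_mod, ← Nat.add_mod, h2, Nat.add_mul_mod_self_left]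
    have e0 : f (p + j) = f i := by rw [← hmod, hji, hmod]
    have e1 : f (p + (j + 1)) = f (i + 1) := by
      rw [← hmod, ← add_assoc, Nat.add_mod, hji, ← Nat.add_mod, hmod]
    refine ⟨j + 1, ?_, ?_⟩
    · simp only [Nat.mod_eq_of_lt (show j + 1 < m + 1 by omega)]
      simpa using e0
    · by_cases hjm : j + 1 = m
      · subst hjm
        simp only [Nat.mod_self]
        rw [← e1, hf]; simp
      · simp only [Nat.mod_eq_of_lt (show j + 1 + 1 < m + 1 by omega)]
        simpa using e1
  · simp
  · simp only [Nat.zero_add]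
    rw [Nat.mod_eq_of_lt (by omega)]; simp

lemma mcycle_core (n k : ℕ) (hn : 2 ≤ n) (hk : 0 < k) (f : ℕ → Fin n)
    (hf : ∀ i, f (i + k) = f i)
    (hc : ∀ x y : Fin n, x ≠ y → ∃ i, s(f i, f (i + 1)) = s(x, y)) (T : Finset (Fin n)) :
    ∃ g : ℕ → Fin n, (∀ i, g (i + (k + T.card)) = g i) ∧
      ∀ x y : Fin n, (x ≠ y ∨ x ∈ T) → ∃ i, s(g i, g (i + 1)) = s(x, y) := by
  induction T using Finset.induction_on with
  | empty => exact ⟨f, by simpa using hf, fun x y h => hc x y (by simpa using h)⟩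
  | insert x T hx ih =>
    obtain ⟨g, hg, hgc⟩ := ih
    obtain ⟨p, hp⟩ : ∃ p, g p = x := by
      have : Nontrivial (Fin n) := Fin.nontrivial_iff_two_le.mpr hn
      obtain ⟨y, hy⟩ := exists_ne x
      obtain ⟨i, hi⟩ := hgc x y (Or.inl hy.symm)
      rcases Sym2.eq_iff.mp hi with h | h
      · exact ⟨i, h.1⟩
      · exact ⟨i + 1, h.2⟩
    obtain ⟨g', h1, h2, j, h3, h4⟩ := mcycle_insert (k + T.card) (by omega) g hg p
    have old : ∀ u v : Fin n, (u ≠ v ∨ u ∈ T) → ∃ i, s(g' i, g' (i + 1)) = s(u, v) := by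
      intro u v huv
      obtain ⟨i, hi⟩ := hgc u v huv
      obtain ⟨j, hj, hj'⟩ := h2 i
      exact ⟨j, by rw [hj, hj', hi]⟩
    refine ⟨g', by rw [Finset.card_insert_of_notMem hx]; exact h1, fun u v huv => ?_⟩
    by_cases huv' : u = v
    · by_cases hux : u = x
      · exact ⟨j, by rw [h3, h4, hp, ← huv', hux]⟩
      · refine old u v (Or.inr ?_)
        rcases huv with h | h
        · exact absurd huv' h
        · exact (Finset.mem_insert.mp h).resolve_left hux
    · exact old u v (Or.inl huv')

lemma mcycle_window {n m : ℕ} (a : ZMod m → Fin n) (i : ZMod m) :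
    (Multiset.range 2).map (fun j => a (i + (j : ZMod m))) = {a i, a (i + 1)} := by
  simp [Multiset.range_succ]
  exact Multiset.pair_comm _ _

lemma mcycle_of_periodic (n m : ℕ) (hm : 0 < m) (hmn : m = (n + 2 - 1).choose 2) (g : ℕ → Fin n)
    (hg : ∀ i, g (i + m) = g i) (hc : ∀ x y : Fin n, ∃ i, s(g i, g (i + 1)) = s(x, y)) :
    ∃ a : ZMod ((n + 2 - 1).choose 2) → Fin n, IsMcycle n 2 a := by
  have hmod : ∀ i, g (i % m) = g i := fun i => Function.Periodic.map_mod_nat hg i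
  unfold IsMcycle
  simp only [mcycle_window]
  have hcard : Fintype.card (Sym (Fin n) 2) = m := by
    rw [Sym.card_sym_eq_choose, hmn, Fintype.card_fin]
  rw [← hmn]
  have : NeZero m := ⟨hm.ne'⟩
  have hcast : ∀ i : ℕ, g ((i : ZMod m).val) = g i := fun i => by rw [ZMod.val_natCast, hmod]
  refine ⟨fun i => g i.val, ?_⟩
  let W : ZMod m → Sym (Fin n) 2 := fun i => ⟨{g i.val, g (i + 1).val}, by simp⟩
  have hs : Function.Surjective W := by
    rintro ⟨s, hs⟩
    obtain ⟨x, y, rfl⟩ := Multiset.card_eq_two.mp hs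
    obtain ⟨i, hi⟩ := hc x y
    refine ⟨(i : ZMod m), Subtype.ext ?_⟩
    have e := hcast (i + 1)
    push_cast at e
    show ({g (i : ZMod m).val, g ((i : ZMod m) + 1).val} : Multiset (Fin n)) = {x, y}
    rw [hcast, e]
    rcases Sym2.eq_iff.mp hi with h | h
    · rw [h.1, h.2]
    · rw [h.1, h.2, Multiset.pair_comm]
  have hb : Function.Bijective W :=
    (Fintype.bijective_iff_surjective_and_card W).mpr ⟨hs, by rw [hcard, ZMod.card]⟩
  intro s hs2
  obtain ⟨i, hi, hu⟩ := hb.existsUnique ⟨s, hs2⟩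
  exact ⟨i, congrArg Subtype.val hi, fun j hj => hu j (Subtype.ext hj)⟩

theorem ucycle_to_mcycle_two (n : ℕ) (hn : 0 < n)
    (h : ∃ b : ZMod (n.choose 2) → Fin n, IsUcycle n 2 b) :
    ∃ a : ZMod ((n + 2 - 1).choose 2) → Fin n, IsMcycle n 2 a := by
  rcases Nat.lt_or_ge n 2 with h1 | h2
  · obtain rfl : n = 1 := by omega
    exact mcycle_of_periodic 1 1 one_pos (by decide) (fun _ => 0) (fun _ => rfl)
      (fun x y => ⟨0, by rw [Subsingleton.elim x 0, Subsingleton.elim y 0]⟩)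
  obtain ⟨b, hb⟩ := h
  unfold IsUcycle at hb
  simp only [mcycle_window] at hb
  have hk : 0 < n.choose 2 := Nat.choose_pos h2
  obtain ⟨g, hg, hgc⟩ := mcycle_core n (n.choose 2) h2 hk (fun i => b (i : ZMod (n.choose 2)))
    (fun i => by simp) (fun x y hxy => by
      obtain ⟨i, hi, -⟩ := hb {x, y} (Finset.card_pair hxy)
      have : NeZero (n.choose 2) := ⟨hk.ne'⟩
      refine ⟨i.val, ?_⟩
      have e : ({x, y} : Finset (Fin n)).val = {x, y} := by
        rw [Finset.insert_val_of_notMem (by simpa using hxy)]; rfl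
      rw [e] at hi
      push_cast
      rw [ZMod.natCast_zmod_val, Sym2.eq_iff]
      rcases Multiset.cons_eq_cons.mp hi with ⟨h, h'⟩ | ⟨-, c, h, h'⟩
      · exact Or.inl ⟨h, Multiset.singleton_inj.mp h'⟩
      · have hc : c = 0 := by
          have := congrArg Multiset.card h
          simpa using this
        subst hc
        exact Or.inr ⟨(Multiset.singleton_inj.mp h').symm, Multiset.singleton_inj.mp h⟩) Finset.univ
  refine mcycle_of_periodic n _ (by omega) ?_ g hg (fun x y => hgc x y (Or.inr (Finset.mem_univ x)))
  rw [Finset.card_univ, Fintype.card_fin, show n + 2 - 1 = n + 1 by omega,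
    Nat.choose_succ_succ' n 1, Nat.choose_one_right, add_comm]
end
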